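/- Suppose μ is a T-ergodic Borel probability measure on Ω that has a local product structure and full support (supp μ = Ω). Suppose T has a fixed point in Ω, and Ω contains at least one point that is not a fixed point of T. Then the set 𝔏(A,μ) = {k ∈ [0,π] : L(A^{(k)}, μ) = 0} is finite. -/

import Mathlib

open Real MeasureTheory Filter Topology Matrix Set

noncomputable section

/-- The left shift on bi-infinite sequences: `(Tω)_n = ω_{n+1}`. -/
def shift (ω : ℤ → ℕ) : ℤ → ℕ := fun n => ω (n + 1)

/-- The subshift of finite type: sequences with letters in `{1,…,ℓ}` and all
transitions `(ω_n, ω_{n+1})` in the allowed set `W`. -/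
def SFT (ℓ : ℕ) (W : Set (ℕ × ℕ)) : Set (ℤ → ℕ) :=
  {ω | (∀ n, 1 ≤ ω n ∧ ω n ≤ ℓ) ∧ ∀ n, (ω n, ω (n + 1)) ∈ W}

/-- The cocycle matrix
`A^{(k)}(ω) = √(ω₀/ω₋₁)·[[((ω₀+ω₋₁)/ω₀)·cos k, −ω₋₁/ω₀],[1, 0]]`. -/
def Acoc (k : ℝ) (ω : ℤ → ℕ) : Matrix (Fin 2) (Fin 2) ℝ :=
  Real.sqrt ((ω 0 : ℝ) / (ω (-1) : ℝ)) •
    !![((ω 0 : ℝ) + (ω (-1) : ℝ)) / (ω 0 : ℝ) * Real.cos k, -((ω (-1) : ℝ) / (ω 0 : ℝ));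
       (1 : ℝ), 0]

/-- The iterated cocycle `A_n(ω) = A^{(k)}(T^{n−1}ω)⋯A^{(k)}(ω)` for `n ≥ 0`,
with `A_0(ω) = Id`. -/
def AIter (k : ℝ) (ω : ℤ → ℕ) : ℕ → Matrix (Fin 2) (Fin 2) ℝ
  | 0 => 1
  | n + 1 => Acoc k (shift^[n] ω) * AIter k ω n

end

/-- We endow 2×2 real matrices with the `L²` operator norm. -/
noncomputable instance : NormedAddCommGroup (Matrix (Fin 2) (Fin 2) ℝ) :=
  Matrix.instL2OpNormedAddCommGroup

/-- Projection onto nonnegative coordinates: `π₊ω = (ω_n)_{n≥0}`. -/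
def projPlus (ω : ℤ → ℕ) : ℕ → ℕ := fun n => ω (n : ℤ)

/-- Projection onto nonpositive coordinates: `π₋ω = (ω_{−n})_{n≥0}`. -/
def projMinus (ω : ℤ → ℕ) : ℕ → ℕ := fun n => ω (-(n : ℤ))

/-- The map `P(ω) = (π₋ω, π₊ω)`; on each cylinder `[0;j]` this is the map `P_j`. -/
def pairProj (ω : ℤ → ℕ) : (ℕ → ℕ) × (ℕ → ℕ) := (projMinus ω, projPlus ω)

/-- `μ` has a local product structure: there is a positive function `ψ` on `Ω`
(written as `ψ ∘ P` for a function on `Ω₋ × Ω₊`) such that for each letter `j`,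
`ψ∘P_j⁻¹` is integrable with respect to `μ_j^− × μ_j^+` and
`(P_j)_* μ_j = (ψ∘P_j⁻¹) d(μ_j^− × μ_j^+)`. -/
def LocalProductStructure (ℓ : ℕ) (W : Set (ℕ × ℕ)) (μ : Measure (ℤ → ℕ)) : Prop :=
  ∃ ψ : (ℕ → ℕ) × (ℕ → ℕ) → ℝ,
    (∀ ω ∈ SFT ℓ W, 0 < ψ (pairProj ω)) ∧
    ∀ j : ℕ, 1 ≤ j → j ≤ ℓ →
      MeasureTheory.Integrable ψ
        (((Measure.map projMinus μ).restrict {a | a 0 = j}).prod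
          ((Measure.map projPlus μ).restrict {a | a 0 = j})) ∧
      Measure.map pairProj (μ.restrict {ω | ω 0 = j}) =
        (((Measure.map projMinus μ).restrict {a | a 0 = j}).prod
          ((Measure.map projPlus μ).restrict {a | a 0 = j})).withDensity
          (fun x => ENNReal.ofReal (ψ x))

/-- `supp μ = Ω`: every open set meeting `Ω` has positive measure. -/
def FullSupport (ℓ : ℕ) (W : Set (ℕ × ℕ)) (μ : Measure (ℤ → ℕ)) : Prop :=
  ∀ U : Set (ℤ → ℕ), IsOpen U → (U ∩ SFT ℓ W).Nonempty → 0 < μ U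

/-!
Conjugating the cocycle makes each letter `b` act on the plane by an elliptic matrix depending only
on `b` and `k`, the letter `p` of the fixed point acting by a rotation. Push forward the product of
`μ` with a smooth fibre measure. In a Cesàro limit the conditional distribution on the fibre depends
only on the past of the base point; if the Lyapunov exponent vanishes, the entropy of the densities
grows sublinearly, and this makes it depend only on the future as well. By the local product
structure it then depends only on the current letter. This attaches to each letter a finitely
additive mean on the punctured plane, and an allowed transition `i → j` carries the mean of `i` to
that of `j` by the action of `i`, so a loop at `p` preserves the mean of `p`. The fixed point
contributes a rotation by `-k`; unless `k` is a multiple of `π / 2`, a mean invariant under it has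
no second and fourth Fourier coefficients, and a matrix of determinant one preserving such a mean is
a rotation. Ergodicity provides a loop at `p` whose last letter differs from `p`. Its matrix is a
rotation only when `cot k` is a root of a polynomial, which is not zero because at the complex value
`i` all the letters become matrices of rank one.
-/

section Entropy

lemma sq_sqrt_sub_sqrt_le_bregman {s t : ℝ} (hs : 0 < s) (ht : 0 < t) :
    (√t - √s) ^ 2 ≤ t * log t - s * log s - (1 + log s) * (t - s) := by
  obtain ⟨a, ha, rfl⟩ : ∃ a : ℝ, 0 < a ∧ s = a ^ 2 := ⟨√s, by positivity, by rw [sq_sqrt hs.le]⟩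
  obtain ⟨b, hb, rfl⟩ : ∃ b : ℝ, 0 < b ∧ t = b ^ 2 := ⟨√t, by positivity, by rw [sq_sqrt ht.le]⟩
  have log_ratio : log a - log b ≤ a / b - 1 := by
    rw [← log_div ha.ne' hb.ne']
    exact log_le_sub_one_of_pos (div_pos ha hb)
  have key : b ^ 2 * (log a - log b) ≤ a * b - b ^ 2 :=
    calc b ^ 2 * (log a - log b) ≤ b ^ 2 * (a / b - 1) := by gcongr
      _ = a * b - b ^ 2 := by field_simp
  rw [sqrt_sq ha.le, sqrt_sq hb.le, log_pow, log_pow]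
  push_cast
  linarith

lemma abs_sub_le_sq_sqrt_sub_sqrt {s t ε : ℝ} (hs : 0 ≤ s) (ht : 0 ≤ t) (hε : 0 < ε) :
    |t - s| ≤ (√t - √s) ^ 2 / (4 * ε) + 2 * ε * (t + s) := by
  obtain ⟨a, ha, rfl⟩ : ∃ a : ℝ, 0 ≤ a ∧ s = a ^ 2 := ⟨√s, by positivity, by rw [sq_sqrt hs]⟩
  obtain ⟨b, hb, rfl⟩ : ∃ b : ℝ, 0 ≤ b ∧ t = b ^ 2 := ⟨√t, by positivity, by rw [sq_sqrt ht]⟩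
  rw [sqrt_sq ha, sqrt_sq hb, show b ^ 2 - a ^ 2 = (b - a) * (b + a) by ring, abs_mul,
    abs_of_nonneg (add_nonneg hb ha), div_add' _ _ _ (by positivity), le_div_iff₀ (by positivity)]
  have amgm := sq_nonneg (|b - a| - 2 * ε * (b + a))
  linear_combination amgm + 4 * sq_nonneg (ε * (b - a)) + sq_abs (b - a)

/-- Bounded measurable real functions. -/
def BddMeasurable {E : Type*} [MeasurableSpace E] (f : E → ℝ) : Prop :=
  Measurable f ∧ ∃ C : ℝ, ∀ x, |f x| ≤ C

/-- Measurable functions bounded and bounded away from zero. -/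
def Pinched {E : Type*} [MeasurableSpace E] (f : E → ℝ) : Prop :=
  Measurable f ∧ ∃ C : ℝ, 0 < C ∧ ∀ x, C⁻¹ ≤ f x ∧ f x ≤ C

section Calculus

variable {E E' : Type*} [MeasurableSpace E] [MeasurableSpace E'] {f g : E → ℝ}

namespace BddMeasurable

lemma exists_nonneg_bound (hf : BddMeasurable f) : ∃ C, 0 ≤ C ∧ ∀ x, |f x| ≤ C := by
  obtain ⟨-, C, hC⟩ := hf
  exact ⟨|C|, abs_nonneg C, fun x => (hC x).trans (le_abs_self C)⟩

lemma const (c : ℝ) : BddMeasurable (fun _ : E => c) := ⟨measurable_const, |c|, fun _ => le_rfl⟩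

lemma add (hf : BddMeasurable f) (hg : BddMeasurable g) : BddMeasurable (fun x => f x + g x) := by
  obtain ⟨hf, C, hC⟩ := hf
  obtain ⟨hg, D, hD⟩ := hg
  exact ⟨hf.add hg, C + D, fun x => (abs_add_le _ _).trans (add_le_add (hC x) (hD x))⟩

lemma mul (hf : BddMeasurable f) (hg : BddMeasurable g) : BddMeasurable (fun x => f x * g x) := by
  obtain ⟨hf, C, hC⟩ := hf
  obtain ⟨hg, D, hD⟩ := hg
  refine ⟨hf.mul hg, C * D, fun x => ?_⟩
  rw [abs_mul]
  exact mul_le_mul (hC x) (hD x) (abs_nonneg _) ((abs_nonneg _).trans (hC x))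

lemma sq (hf : BddMeasurable f) : BddMeasurable (fun x => f x ^ 2) := by
  simpa only [_root_.sq] using hf.mul hf

lemma neg (hf : BddMeasurable f) : BddMeasurable (fun x => -f x) := by
  simpa only [neg_one_mul] using (const (-1)).mul hf

lemma sub (hf : BddMeasurable f) (hg : BddMeasurable g) : BddMeasurable (fun x => f x - g x) := by
  simpa only [sub_eq_add_neg] using hf.add hg.neg

lemma comp {u : E' → E} (hf : BddMeasurable f) (hu : Measurable u) :
    BddMeasurable (fun x => f (u x)) :=
  ⟨hf.1.comp hu, hf.2.imp fun _ h x => h (u x)⟩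

lemma integrable (hf : BddMeasurable f) (P : Measure E) [IsFiniteMeasure P] : Integrable f P := by
  obtain ⟨hf, C, hC⟩ := hf
  exact Integrable.of_bound hf.aestronglyMeasurable C (ae_of_all _ hC)

end BddMeasurable

namespace Pinched

lemma pos (hf : Pinched f) (x : E) : 0 < f x := by
  obtain ⟨-, C, hC, h⟩ := hf
  exact (inv_pos.2 hC).trans_le (h x).1

lemma bdd (hf : Pinched f) : BddMeasurable f := by
  refine ⟨hf.1, ?_⟩
  obtain ⟨C, -, h⟩ := hf.2
  exact ⟨C, fun x => by rw [abs_of_pos (hf.pos x)]; exact (h x).2⟩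

lemma log (hf : Pinched f) : BddMeasurable (fun x => Real.log (f x)) := by
  refine ⟨hf.1.log, ?_⟩
  obtain ⟨C, hC, h⟩ := hf.2
  refine ⟨Real.log C, fun x => abs_le.2 ⟨?_, Real.log_le_log (hf.pos x) (h x).2⟩⟩
  rw [← Real.log_inv]
  exact Real.log_le_log (inv_pos.2 hC) (h x).1

lemma sqrt (hf : Pinched f) : BddMeasurable (fun x => √(f x)) := by
  refine ⟨hf.1.sqrt, ?_⟩
  obtain ⟨C, -, h⟩ := hf.2
  exact ⟨√C, fun x => by rw [abs_of_nonneg (sqrt_nonneg _)]; exact sqrt_le_sqrt (h x).2⟩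

lemma one : Pinched (fun _ : E => (1 : ℝ)) := ⟨measurable_const, 1, one_pos, by simp⟩

lemma mul (hf : Pinched f) (hg : Pinched g) : Pinched (fun x => f x * g x) := by
  refine ⟨hf.1.mul hg.1, ?_⟩
  obtain ⟨C, hC, h⟩ := hf.2
  obtain ⟨D, hD, k⟩ := hg.2
  refine ⟨C * D, by positivity, fun x => ⟨?_, ?_⟩⟩
  · rw [mul_inv]
    exact mul_le_mul (h x).1 (k x).1 (by positivity) (hf.pos x).le
  · exact mul_le_mul (h x).2 (k x).2 (hg.pos x).le hC.le

lemma comp {u : E' → E} (hf : Pinched f) (hu : Measurable u) : Pinched (fun x => f (u x)) :=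
  ⟨hf.1.comp hu, hf.2.imp fun _ h => ⟨h.1, fun x => h.2 (u x)⟩⟩

lemma mul_log (hf : Pinched f) : BddMeasurable (fun x => f x * Real.log (f x)) :=
  hf.bdd.mul hf.log

end Pinched

end Calculus

section HellingerEntropy

variable {E : Type*} [MeasurableSpace E] {P : Measure E} {σ τ : E → ℝ}

/-- The differential entropy `∫ f log f` of a density, with the sign of the Kullback–Leibler
divergence of `f P` from `P`. -/
noncomputable def entropy (P : Measure E) (f : E → ℝ) : ℝ := ∫ x, f x * log (f x) ∂P

/-- The squared Hellinger distance of two densities. -/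
noncomputable def hellingerSq (P : Measure E) (f g : E → ℝ) : ℝ := ∫ x, (√(g x) - √(f x)) ^ 2 ∂P

lemma hellingerSq_le_entropy_sub_entropy [IsFiniteMeasure P] (hσ : Pinched σ) (hτ : Pinched τ)
    (h : ∫ x, (1 + log (σ x)) * τ x ∂P = ∫ x, (1 + log (σ x)) * σ x ∂P) :
    hellingerSq P σ τ ≤ entropy P τ - entropy P σ := by
  have logσ : BddMeasurable fun x => 1 + log (σ x) := (BddMeasurable.const 1).add hσ.log
  have int_entropy := (hτ.mul_log.sub hσ.mul_log).integrable P
  have int_linear := ((logσ.mul hτ.bdd).sub (logσ.mul hσ.bdd)).integrable P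
  calc hellingerSq P σ τ
      ≤ ∫ x, ((τ x * log (τ x) - σ x * log (σ x)) -
          ((1 + log (σ x)) * τ x - (1 + log (σ x)) * σ x)) ∂P := by
        refine integral_mono ((hτ.sqrt.sub hσ.sqrt).sq.integrable P)
          (int_entropy.sub int_linear) fun x => ?_
        linarith [sq_sqrt_sub_sqrt_le_bregman (hσ.pos x) (hτ.pos x)]
    _ = entropy P τ - entropy P σ := by
        rw [integral_sub int_entropy int_linear,
          integral_sub ((logσ.mul hτ.bdd).integrable P) ((logσ.mul hσ.bdd).integrable P), h,
          sub_self, sub_zero, integral_sub (hτ.mul_log.integrable P) (hσ.mul_log.integrable P),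
          entropy, entropy]

lemma hellingerSq_nonneg : 0 ≤ hellingerSq P σ τ := integral_nonneg fun _ => sq_nonneg _

lemma entropy_nonneg [IsProbabilityMeasure P] (hτ : Pinched τ) (h : ∫ x, τ x ∂P = 1) :
    0 ≤ entropy P τ := by
  have := hellingerSq_le_entropy_sub_entropy (P := P) Pinched.one hτ (by simp [h])
  simp only [entropy, log_one, mul_zero, integral_zero, sub_zero] at this
  exact hellingerSq_nonneg.trans this

lemma abs_integral_mul_sub_le_hellingerSq [IsFiniteMeasure P] (hσ : Pinched σ) (hτ : Pinched τ)
    (hσ1 : ∫ x, σ x ∂P = 1) (hτ1 : ∫ x, τ x ∂P = 1) {Φ : E → ℝ} {B ε : ℝ} (hΦ : Measurable Φ)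
    (hB : 0 ≤ B) (hΦB : ∀ x, |Φ x| ≤ B) (hε : 0 < ε) :
    |∫ x, Φ x * τ x ∂P - ∫ x, Φ x * σ x ∂P| ≤ B * (hellingerSq P σ τ / (4 * ε) + 4 * ε) := by
  have hΦ' : BddMeasurable Φ := ⟨hΦ, B, hΦB⟩
  have int_diff := ((hΦ'.mul hτ.bdd).sub (hΦ'.mul hσ.bdd)).integrable P
  have int_sq := ((hτ.sqrt.sub hσ.sqrt).sq.integrable P).div_const (4 * ε)
  have int_add := (hτ.bdd.add hσ.bdd).integrable P
  rw [← integral_sub ((hΦ'.mul hτ.bdd).integrable P) ((hΦ'.mul hσ.bdd).integrable P)]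
  calc |∫ x, (Φ x * τ x - Φ x * σ x) ∂P|
      ≤ ∫ x, |Φ x * τ x - Φ x * σ x| ∂P := abs_integral_le_integral_abs
    _ ≤ ∫ x, B * ((√(τ x) - √(σ x)) ^ 2 / (4 * ε) + 2 * ε * (τ x + σ x)) ∂P := by
        refine integral_mono int_diff.abs ((int_sq.add (int_add.const_mul _)).const_mul _)
          fun x => ?_
        simp only [← mul_sub, abs_mul]
        exact mul_le_mul (hΦB x)
          (abs_sub_le_sq_sqrt_sub_sqrt (hσ.pos x).le (hτ.pos x).le hε) (abs_nonneg _) hB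
    _ = B * (hellingerSq P σ τ / (4 * ε) + 4 * ε) := by
        rw [integral_const_mul, integral_add int_sq (int_add.const_mul _), integral_div,
          integral_const_mul, integral_add (hτ.bdd.integrable P) (hσ.bdd.integrable P), hτ1, hσ1,
          hellingerSq]
        ring

end HellingerEntropy

section Cesaro

variable {a b u : ℕ → ℝ}

lemma tendsto_div_of_forall_abs_le {C : ℝ} (hC : ∀ n, |a n| ≤ C) :
    Tendsto (fun N : ℕ => a N / N) atTop (𝓝 0) := by
  refine squeeze_zero_norm (fun N => ?_) (tendsto_const_div_atTop_nhds_zero_nat C)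
  rw [norm_div, Real.norm_eq_abs, Real.norm_natCast]
  gcongr
  exact hC N

lemma tendsto_add_nat_div (hu : Tendsto (fun N : ℕ => u N / N) atTop (𝓝 0)) (k : ℕ) :
    Tendsto (fun N : ℕ => u (N + k) / N) atTop (𝓝 0) := by
  have ratio : Tendsto (fun N : ℕ => 1 + (k : ℝ) / N) atTop (𝓝 (1 + 0)) :=
    (tendsto_const_div_atTop_nhds_zero_nat (k : ℝ)).const_add 1
  have := (hu.comp (tendsto_add_atTop_nat k)).mul ratio
  rw [zero_mul] at this
  refine this.congr' ?_
  filter_upwards [eventually_gt_atTop 0] with N hN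
  have : (N : ℝ) ≠ 0 := by positivity
  have : (N : ℝ) + k ≠ 0 := by positivity
  simp only [Function.comp_apply]
  push_cast
  field_simp

lemma tendsto_cesaro_sub_shift (hu : Tendsto (fun N : ℕ => u N / N) atTop (𝓝 0)) (k : ℕ) :
    Tendsto (fun N : ℕ => (∑ n ∈ Finset.range N, (u (n + k) - u n)) / N) atTop (𝓝 0) := by
  have telescope (N : ℕ) : ∑ n ∈ Finset.range N, (u (n + k) - u n)
      = ∑ i ∈ Finset.range k, (u (N + i) - u i) := by
    have swap := Finset.sum_range_add u k N
    rw [add_comm k N, Finset.sum_range_add u N k] at swap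
    simp only [Finset.sum_sub_distrib, add_comm _ k]
    linarith
  simp only [telescope, Finset.sum_div, sub_div]
  rw [show (0 : ℝ) = ∑ i ∈ Finset.range k, (0 - 0) by simp]
  exact tendsto_finsetSum _ fun i _ =>
    (tendsto_add_nat_div hu i).sub (tendsto_const_div_atTop_nhds_zero_nat _)

lemma tendsto_cesaro_of_forall_abs_le {B : ℝ} (hB : 0 ≤ B)
    (hab : ∀ ε, 0 < ε → ∀ n, |a n| ≤ B * (b n / (4 * ε) + 4 * ε))
    (hb : Tendsto (fun N : ℕ => (∑ n ∈ Finset.range N, b n) / N) atTop (𝓝 0)) :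
    Tendsto (fun N : ℕ => (∑ n ∈ Finset.range N, a n) / N) atTop (𝓝 0) := by
  rw [tendsto_zero_iff_abs_tendsto_zero]
  refine tendsto_order.2 ⟨fun δ hδ => Eventually.of_forall fun N => hδ.trans_le (abs_nonneg _),
    fun δ hδ => ?_⟩
  obtain ⟨ε, hε, hεδ⟩ : ∃ ε : ℝ, 0 < ε ∧ B * (4 * ε) < δ := by
    refine ⟨δ / (4 * (B + 1)), by positivity, ?_⟩
    rw [show B * (4 * (δ / (4 * (B + 1)))) = δ * B / (B + 1) by field_simp,
      div_lt_iff₀ (by positivity)]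
    linarith
  have bound_lim : Tendsto (fun N : ℕ =>
      B * ((∑ n ∈ Finset.range N, b n) / N / (4 * ε) + 4 * ε)) atTop
      (𝓝 (B * (0 / (4 * ε) + 4 * ε))) :=
    ((hb.div_const _).add_const _).const_mul _
  rw [zero_div, zero_add] at bound_lim
  filter_upwards [bound_lim.eventually_lt_const hεδ, eventually_gt_atTop 0] with N hN hN0
  refine lt_of_le_of_lt ?_ hN
  have hN0' : (0 : ℝ) < N := by exact_mod_cast hN0
  rw [Function.comp_apply, abs_div, abs_of_pos hN0', div_le_iff₀ hN0']
  calc |∑ n ∈ Finset.range N, a n|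
      ≤ ∑ n ∈ Finset.range N, B * (b n / (4 * ε) + 4 * ε) :=
        (Finset.abs_sum_le_sum_abs _ _).trans (Finset.sum_le_sum fun n _ => hab ε hε n)
    _ = B * ((∑ n ∈ Finset.range N, b n) / N / (4 * ε) + 4 * ε) * N := by
        rw [← Finset.mul_sum, Finset.sum_add_distrib, ← Finset.sum_div, Finset.sum_const,
          Finset.card_range, nsmul_eq_mul]
        field_simp

end Cesaro

section CondExp

variable {E : Type*} {𝒢 : MeasurableSpace E} [mE : MeasurableSpace E] {P : Measure E}

lemma BddMeasurable.integrable_mul {h g : E → ℝ} (hh : BddMeasurable h) (hg : Integrable g P) :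
    Integrable (fun x => h x * g x) P := by
  obtain ⟨C, hC⟩ := hh.2
  exact hg.bdd_mul hh.1.aestronglyMeasurable (ae_of_all _ hC)

lemma exists_condExp_mem_Icc [IsFiniteMeasure P] (h𝒢 : 𝒢 ≤ mE) {f : E → ℝ} (hf : Measurable f)
    {a b : ℝ} (hab : a ≤ b) (h : ∀ x, f x ∈ Icc a b) :
    ∃ σ : E → ℝ, Measurable[𝒢] σ ∧ (∀ x, σ x ∈ Icc a b) ∧ σ =ᵐ[P] P[f | 𝒢] := by
  have int_f : Integrable f P :=
    Integrable.of_mem_Icc a b hf.aemeasurable (ae_of_all _ h)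
  have lower := condExp_mono (m := 𝒢) (integrable_const (μ := P) a) int_f
    (ae_of_all _ fun x => (h x).1)
  have upper := condExp_mono (m := 𝒢) int_f (integrable_const (μ := P) b)
    (ae_of_all _ fun x => (h x).2)
  rw [condExp_const h𝒢] at lower upper
  refine ⟨fun x => max a (min b ((P[f | 𝒢]) x)),
    measurable_const.max (measurable_const.min stronglyMeasurable_condExp.measurable),
    fun x => ⟨le_max_left _ _, max_le hab (min_le_left _ _)⟩, ?_⟩
  filter_upwards [lower, upper] with x hx hx'
  rw [min_eq_right hx', max_eq_right hx]

lemma exists_bddMeasurable_condExp [IsFiniteMeasure P] (h𝒢 : 𝒢 ≤ mE) {f : E → ℝ}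
    (hf : BddMeasurable f) : ∃ σ : E → ℝ, Measurable[𝒢] σ ∧ BddMeasurable σ ∧ σ =ᵐ[P] P[f | 𝒢] := by
  obtain ⟨C, hC0, hC⟩ := hf.exists_nonneg_bound
  obtain ⟨σ, hσ, hσC, hσf⟩ := exists_condExp_mem_Icc (P := P) h𝒢 hf.1
    (neg_le_self hC0) fun x => abs_le.1 (hC x)
  exact ⟨σ, hσ, ⟨hσ.mono h𝒢 le_rfl, C, fun x => abs_le.2 (hσC x)⟩, hσf⟩

lemma integral_condExp_mul [IsFiniteMeasure P] (h𝒢 : 𝒢 ≤ mE) {h σ g : E → ℝ} (hh : BddMeasurable h)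
    (hσ : σ =ᵐ[P] P[h | 𝒢]) (hg : Measurable[𝒢] g) (hgi : Integrable g P) :
    ∫ x, σ x * g x ∂P = ∫ x, h x * g x ∂P := by
  rw [← integral_condExp h𝒢 (f := fun x => h x * g x)]
  refine integral_congr_ae ?_
  filter_upwards [hσ, condExp_mul_of_stronglyMeasurable_right (m := 𝒢) hg.stronglyMeasurable
    (hh.integrable_mul hgi) (hh.integrable P)] with x hx pull_out
  rw [hx]
  exact pull_out.symm

lemma integral_mul_condExp [IsFiniteMeasure P] (h𝒢 : 𝒢 ≤ mE) {σ g : E → ℝ} (hσm : Measurable[𝒢] σ)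
    (hσ : BddMeasurable σ) (hg : Integrable g P) :
    ∫ x, σ x * (P[g | 𝒢]) x ∂P = ∫ x, σ x * g x ∂P := by
  rw [← integral_condExp h𝒢 (f := fun x => σ x * g x)]
  exact integral_congr_ae (condExp_mul_of_stronglyMeasurable_left (m := 𝒢)
    hσm.stronglyMeasurable (hσ.integrable_mul hg) hg).symm

/-- `σ` is an everywhere pinched version of the conditional expectation of `f`. -/
structure IsPinchedCondExp (𝒢 : MeasurableSpace E) [MeasurableSpace E] (P : Measure E)
    (f σ : E → ℝ) : Prop where
  measurable : Measurable[𝒢] σ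
  pinched : Pinched σ
  ae_eq : σ =ᵐ[P] P[f | 𝒢]

namespace IsPinchedCondExp

variable {f σ : E → ℝ}

lemma measurable_one_add_log (hσ : IsPinchedCondExp 𝒢 P f σ) :
    Measurable[𝒢] fun x => 1 + log (σ x) :=
  measurable_const.add (Real.measurable_log.comp hσ.measurable)

lemma bddMeasurable_one_add_log (hσ : IsPinchedCondExp 𝒢 P f σ) :
    BddMeasurable fun x => 1 + log (σ x) :=
  (BddMeasurable.const 1).add hσ.pinched.log

variable [IsFiniteMeasure P]

lemma exists_of_pinched (h𝒢 : 𝒢 ≤ mE) {f : E → ℝ} (hf : Pinched f) :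
    ∃ σ, IsPinchedCondExp 𝒢 P f σ := by
  obtain ⟨C, hC, h⟩ := hf.2
  obtain ⟨σ, hσ, hσC, hσf⟩ := exists_condExp_mem_Icc (P := P) (a := min C⁻¹ C) h𝒢 hf.1
    (min_le_right _ _) fun x => ⟨(min_le_left _ _).trans (h x).1, (h x).2⟩
  have hm : 0 < min C⁻¹ C := lt_min (inv_pos.2 hC) hC
  refine ⟨σ, hσ, ⟨hσ.mono h𝒢 le_rfl, (min C⁻¹ C)⁻¹, inv_pos.2 hm, fun x => ⟨?_, ?_⟩⟩, hσf⟩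
  · rw [inv_inv]
    exact (hσC x).1
  · refine (hσC x).2.trans ?_
    rw [le_inv_comm₀ hC hm]
    exact min_le_left _ _

lemma integral_mul (hσ : IsPinchedCondExp 𝒢 P f σ) (h𝒢 : 𝒢 ≤ mE) (hf : Pinched f) {Ψ : E → ℝ}
    (hΨ : Measurable[𝒢] Ψ) (hΨb : BddMeasurable Ψ) :
    ∫ x, Ψ x * σ x ∂P = ∫ x, Ψ x * f x ∂P := by
  simpa only [mul_comm] using integral_condExp_mul h𝒢 hf.bdd hσ.ae_eq hΨ (hΨb.integrable P)

lemma integral_eq (hσ : IsPinchedCondExp 𝒢 P f σ) (h𝒢 : 𝒢 ≤ mE) :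
    ∫ x, σ x ∂P = ∫ x, f x ∂P := by
  rw [integral_congr_ae hσ.ae_eq, integral_condExp h𝒢]

lemma entropy_le (hσ : IsPinchedCondExp 𝒢 P f σ) (h𝒢 : 𝒢 ≤ mE) (hf : Pinched f) :
    entropy P σ ≤ entropy P f :=
  sub_nonneg.1 <| hellingerSq_nonneg.trans <| hellingerSq_le_entropy_sub_entropy hσ.pinched hf
    (hσ.integral_mul h𝒢 hf hσ.measurable_one_add_log hσ.bddMeasurable_one_add_log).symm

end IsPinchedCondExp

end CondExp

section QuasiInvariance

variable {E : Type*} {𝒢 : MeasurableSpace E} [mE : MeasurableSpace E] {P : Measure E}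
  {F : E ≃ᵐ E} {ρ : ℕ → E → ℝ} {σ : E → ℝ}

lemma symm_iterate_iterate (F : E ≃ᵐ E) (k : ℕ) (x : E) : F.symm^[k] (F^[k] x) = x :=
  (Function.LeftInverse.iterate F.symm_apply_apply k) x

lemma measurableEmbedding_iterate (F : E ≃ᵐ E) (n : ℕ) : MeasurableEmbedding (F^[n]) := by
  induction n with
  | zero => exact MeasurableEmbedding.id
  | succ n ih => exact ih.comp F.measurableEmbedding

/-- A quasi-invariant system: `ρ n` is the density of the push-forward of `P` under `F^[n]`, and
`𝒢` is a sub-σ-algebra with `F⁻¹ 𝒢 ⊆ 𝒢`, to which the Jacobians `ρ n ∘ F^[n]` are adapted. -/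
structure QuasiInvariant {E : Type*} (𝒢 : MeasurableSpace E) [mE : MeasurableSpace E]
    (P : Measure E) (F : E ≃ᵐ E) (ρ : ℕ → E → ℝ) : Prop where
  le : 𝒢 ≤ mE
  pinched : ∀ n, Pinched (ρ n)
  cocycle : ∀ n k x, ρ (n + k) x = ρ k x * ρ n (F.symm^[k] x)
  transfer : ∀ n (Φ : E → ℝ), ∫ x, Φ (F^[n] x) ∂P = ∫ x, Φ x * ρ n x ∂P
  measurable : Measurable[𝒢, 𝒢] F
  adapted : ∀ k, Measurable[𝒢] (fun x => ρ k (F^[k] x))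

/-- The density of the push-forward of `σ P` under `F^[k]`. -/
def pushDensity (F : E ≃ᵐ E) (ρ : ℕ → E → ℝ) (k : ℕ) (σ : E → ℝ) (x : E) : ℝ :=
  ρ k x * σ (F.symm^[k] x)

namespace QuasiInvariant

lemma of_density {Q : Measure E} {θ : E → ℝ} (hF : MeasurePreserving F Q Q) (hθ : Measurable θ)
    (hθ0 : ∀ x, 0 < θ x) (hθF : Pinched fun x => θ (F.symm x) / θ x) (h𝒢 : 𝒢 ≤ mE)
    (hF𝒢 : Measurable[𝒢, 𝒢] F) (hθ𝒢 : Measurable[𝒢] θ) :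
    QuasiInvariant 𝒢 (Q.withDensity fun x => ENNReal.ofReal (θ x)) F
      (fun n x => θ (F.symm^[n] x) / θ x) where
  le := h𝒢
  pinched n := by
    induction n with
    | zero => simpa only [Function.iterate_zero, id_eq, div_self (hθ0 _).ne'] using Pinched.one
    | succ n ih =>
      refine cast (congrArg Pinched (funext fun x => ?_)) ((ih.comp F.symm.measurable).mul hθF)
      exact div_mul_div_cancel₀ (hθ0 _).ne'
  cocycle n k x := by
    rw [Function.iterate_add_apply, mul_comm, div_mul_div_cancel₀ (hθ0 _).ne']
  transfer n Φ := by
    simp only [integral_withDensity_eq_integral_toReal_smul hθ.ennreal_ofReal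
      (ae_of_all _ fun _ => ENNReal.ofReal_lt_top), ENNReal.toReal_ofReal (hθ0 _).le, smul_eq_mul]
    refine Eq.trans ?_ ((hF.iterate n).integral_comp (measurableEmbedding_iterate F n) _)
    congr 1 with x
    rw [symm_iterate_iterate]
    have := (hθ0 (F^[n] x)).ne'
    field_simp
  measurable := hF𝒢
  adapted k := by
    simp only [symm_iterate_iterate]
    exact hθ𝒢.div (hθ𝒢.comp (@Measurable.iterate E 𝒢 F hF𝒢 k))

lemma measurable_iterate (h : QuasiInvariant 𝒢 P F ρ) (k : ℕ) : Measurable[𝒢, 𝒢] (F^[k]) :=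
  @Measurable.iterate E 𝒢 F h.measurable k

lemma pinched_pushDensity (h : QuasiInvariant 𝒢 P F ρ) (hσ : Pinched σ) (k : ℕ) :
    Pinched (pushDensity F ρ k σ) :=
  (h.pinched k).mul (hσ.comp (F.symm.measurable.iterate k))

lemma pushDensity_density (h : QuasiInvariant 𝒢 P F ρ) (n k : ℕ) :
    pushDensity F ρ k (ρ n) = ρ (n + k) := funext fun x => (h.cocycle n k x).symm

lemma integral_mul_pushDensity (h : QuasiInvariant 𝒢 P F ρ) (σ : E → ℝ) (k : ℕ) (Φ : E → ℝ) :
    ∫ x, Φ x * pushDensity F ρ k σ x ∂P = ∫ x, Φ (F^[k] x) * σ x ∂P := by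
  have := h.transfer k fun x => Φ x * σ (F.symm^[k] x)
  simp only [symm_iterate_iterate] at this
  rw [this]
  congr 1 with x
  rw [pushDensity]
  ring

lemma integral_density [IsProbabilityMeasure P] (h : QuasiInvariant 𝒢 P F ρ) (n : ℕ) :
    ∫ x, ρ n x ∂P = 1 := by
  simpa using (h.transfer n fun _ => 1).symm

lemma entropy_density (h : QuasiInvariant 𝒢 P F ρ) (n : ℕ) :
    entropy P (ρ n) = ∫ x, log (ρ n (F^[n] x)) ∂P := by
  rw [h.transfer n fun x => log (ρ n x), entropy]
  simp only [mul_comm]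

lemma entropy_pushDensity [IsFiniteMeasure P] (h : QuasiInvariant 𝒢 P F ρ) (hσ : Pinched σ)
    (k : ℕ) :
    entropy P (pushDensity F ρ k σ) = entropy P σ + ∫ x, log (ρ k (F^[k] x)) * σ x ∂P := by
  have hk : Pinched fun x => ρ k (F^[k] x) := (h.pinched k).comp (F.measurable.iterate k)
  calc entropy P (pushDensity F ρ k σ)
      = ∫ x, log (pushDensity F ρ k σ x) * pushDensity F ρ k σ x ∂P := by
        simp only [entropy, mul_comm]
    _ = ∫ x, log (ρ k (F^[k] x) * σ x) * σ x ∂P := by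
        rw [h.integral_mul_pushDensity σ k fun x => log (pushDensity F ρ k σ x)]
        simp only [pushDensity, symm_iterate_iterate]
    _ = ∫ x, (σ x * log (σ x) + log (ρ k (F^[k] x)) * σ x) ∂P := by
        congr 1 with x
        rw [log_mul (hk.pos x).ne' (hσ.pos x).ne']
        ring
    _ = entropy P σ + ∫ x, log (ρ k (F^[k] x)) * σ x ∂P :=
        integral_add (hσ.mul_log.integrable P) ((hk.log.mul hσ.bdd).integrable P)

section Projection

variable {σ : ℕ → E → ℝ}

lemma integral_mul_pushDensity_condExp [IsFiniteMeasure P] (h : QuasiInvariant 𝒢 P F ρ)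
    (hσ : ∀ n, IsPinchedCondExp 𝒢 P (ρ n) (σ n)) (n k : ℕ) {Ψ : E → ℝ} (hΨ : BddMeasurable Ψ)
    (hΨm : Measurable[𝒢] fun x => Ψ (F^[k] x)) :
    ∫ x, Ψ x * pushDensity F ρ k (σ n) x ∂P = ∫ x, Ψ x * ρ (n + k) x ∂P := by
  rw [← h.pushDensity_density n k, h.integral_mul_pushDensity, h.integral_mul_pushDensity]
  exact (hσ n).integral_mul h.le (h.pinched n) hΨm (hΨ.comp (F.measurable.iterate k))

lemma hellingerSq_pushDensity_condExp_le [IsFiniteMeasure P] (h : QuasiInvariant 𝒢 P F ρ)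
    (hσ : ∀ n, IsPinchedCondExp 𝒢 P (ρ n) (σ n)) (n k : ℕ) :
    hellingerSq P (σ (n + k)) (pushDensity F ρ k (σ n)) ≤
      (entropy P (ρ (n + k)) - entropy P (σ (n + k))) -
        (entropy P (ρ n) - entropy P (σ n)) := by
  have entropy_push : entropy P (pushDensity F ρ k (σ n)) =
      entropy P (σ n) + (entropy P (ρ (n + k)) - entropy P (ρ n)) := by
    have same_jacobian := (hσ n).integral_mul h.le (h.pinched n)
      (Real.measurable_log.comp (h.adapted k))
      ((h.pinched k).log.comp (F.measurable.iterate k))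
    simp only [Function.comp_apply] at same_jacobian
    rw [← h.pushDensity_density n k, h.entropy_pushDensity (hσ n).pinched,
      h.entropy_pushDensity (h.pinched n), same_jacobian]
    ring
  have same_log : ∫ x, (1 + log (σ (n + k) x)) * pushDensity F ρ k (σ n) x ∂P =
      ∫ x, (1 + log (σ (n + k) x)) * σ (n + k) x ∂P := by
    rw [h.integral_mul_pushDensity_condExp hσ n k (hσ _).bddMeasurable_one_add_log
      ((hσ _).measurable_one_add_log.comp (h.measurable_iterate k)),
      (hσ (n + k)).integral_mul h.le (h.pinched _) (hσ _).measurable_one_add_log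
        (hσ _).bddMeasurable_one_add_log]
  have := hellingerSq_le_entropy_sub_entropy (hσ (n + k)).pinched
    (h.pinched_pushDensity (hσ n).pinched k) same_log
  linarith

lemma tendsto_entropy_sub_div [IsProbabilityMeasure P] (h : QuasiInvariant 𝒢 P F ρ)
    (hσ : ∀ n, IsPinchedCondExp 𝒢 P (ρ n) (σ n))
    (hent : Tendsto (fun N : ℕ => entropy P (ρ N) / N) atTop (𝓝 0)) :
    Tendsto (fun N : ℕ => (entropy P (ρ N) - entropy P (σ N)) / N) atTop (𝓝 0) := by
  refine squeeze_zero (fun N => ?_) (fun N => ?_) hent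
  · have := (hσ N).entropy_le h.le (h.pinched N)
    exact div_nonneg (sub_nonneg.2 this) (Nat.cast_nonneg N)
  · have := entropy_nonneg (hσ N).pinched (((hσ N).integral_eq h.le).trans (h.integral_density N))
    gcongr
    linarith

end Projection

theorem cesaro_sub_condExp [IsProbabilityMeasure P] (h : QuasiInvariant 𝒢 P F ρ)
    (hent : Tendsto (fun N : ℕ => entropy P (ρ N) / N) atTop (𝓝 0)) (k : ℕ) {Φ : E → ℝ}
    (hΦ : BddMeasurable Φ) (hΦm : Measurable[𝒢] fun x => Φ (F^[k] x)) :
    Tendsto (fun N : ℕ => (∑ n ∈ Finset.range N,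
      (∫ x, Φ x * ρ (n + k) x ∂P - ∫ x, Φ x * (P[ρ (n + k) | 𝒢]) x ∂P)) / N) atTop (𝓝 0) := by
  choose σ hσ using fun n => IsPinchedCondExp.exists_of_pinched (P := P) h.le (h.pinched n)
  obtain ⟨B, hB0, hB⟩ := hΦ.exists_nonneg_bound
  have hσ1 (n : ℕ) : ∫ x, σ n x ∂P = 1 := ((hσ n).integral_eq h.le).trans (h.integral_density n)
  have push_integral (n : ℕ) : ∫ x, pushDensity F ρ k (σ n) x ∂P = 1 := by
    simpa only [one_mul, hσ1] using h.integral_mul_pushDensity (σ n) k fun _ => 1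
  have push_condExp (n : ℕ) : ∫ x, Φ x * (P[ρ (n + k) | 𝒢]) x ∂P = ∫ x, Φ x * σ (n + k) x ∂P :=
    integral_congr_ae (by filter_upwards [(hσ (n + k)).ae_eq] with x hx; rw [hx])
  refine tendsto_cesaro_of_forall_abs_le hB0 (fun ε hε n => ?_)
    (tendsto_cesaro_sub_shift (h.tendsto_entropy_sub_div hσ hent) k)
  rw [push_condExp, ← h.integral_mul_pushDensity_condExp hσ n k hΦ hΦm]
  refine (abs_integral_mul_sub_le_hellingerSq (hσ _).pinched
    (h.pinched_pushDensity (hσ n).pinched k) (hσ1 _) (push_integral n) hΦ.1 hB0 hB hε).trans ?_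
  gcongr
  exact h.hellingerSq_pushDensity_condExp_le hσ n k

end QuasiInvariant

end QuasiInvariance

end Entropy

section WeakLimits

lemma exists_tendsto_inner_of_norm_le {H ι : Type*} [NormedAddCommGroup H] [InnerProductSpace ℝ H]
    [CompleteSpace H] (U : Ultrafilter ι) {v : ι → H} {C : ℝ} (hC : ∀ i, ‖v i‖ ≤ C) :
    ∃ ξ : H, ∀ w, Tendsto (fun i => inner ℝ (v i) w) U (𝓝 (inner ℝ ξ w)) := by
  let dual (i : ι) : WeakDual ℝ H := StrongDual.toWeakDual (InnerProductSpace.toDual ℝ H (v i))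
  have dual_mem (i : ι) :
      dual i ∈ WeakDual.toStrongDual ⁻¹' Metric.closedBall (0 : StrongDual ℝ H) C := by
    rw [mem_preimage, mem_closedBall_zero_iff]
    exact ((InnerProductSpace.toDual ℝ H).norm_map (v i)).trans_le (hC i)
  obtain ⟨L, -, hL⟩ := (WeakDual.isCompact_closedBall (0 : StrongDual ℝ H) C)
    |>.ultrafilter_le_nhds (U.map dual)
      (le_principal_iff.2 (Filter.mem_map.2 (Eventually.of_forall dual_mem)))
  refine ⟨(InnerProductSpace.toDual ℝ H).symm (WeakDual.toStrongDual L), fun w => ?_⟩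
  rw [InnerProductSpace.toDual_symm_apply]
  exact (WeakDual.eval_continuous w).continuousAt.tendsto.comp hL

lemma exists_weak_limit {E ι : Type*} [MeasurableSpace E] (P : Measure E) [IsProbabilityMeasure P]
    (U : Ultrafilter ι) {η : ι → E → ℝ} (hη : ∀ i, Measurable (η i)) {C : ℝ}
    (hC : ∀ i x, |η i x| ≤ C) :
    ∃ ξ : E → ℝ, Integrable ξ P ∧ ∀ h : E → ℝ, BddMeasurable h →
      Tendsto (fun i => ∫ x, h x * η i x ∂P) U (𝓝 (∫ x, h x * ξ x ∂P)) := by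
  have memLp {g : E → ℝ} (hg : BddMeasurable g) : MemLp g 2 P := by
    obtain ⟨D, hD⟩ := hg.2
    exact MemLp.of_bound hg.1.aestronglyMeasurable D (ae_of_all _ hD)
  have η_memLp (i : ι) : MemLp (η i) 2 P := memLp ⟨hη i, C, hC i⟩
  obtain ⟨i₀⟩ := (inferInstance : (U : Filter ι).NeBot).nonempty
  obtain ⟨x₀⟩ := P.nonempty_of_neZero
  have norm_le (i : ι) : ‖(η_memLp i).toLp (η i)‖ ≤ C := by
    refine (Lp.norm_le_of_ae_bound ((abs_nonneg _).trans (hC i₀ x₀)) (C := C) ?_).trans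
      (by simp [measureUnivNNReal])
    filter_upwards [(η_memLp i).coeFn_toLp] with x hx
    rw [hx]
    exact hC i x
  obtain ⟨ξ, hξ⟩ := exists_tendsto_inner_of_norm_le U norm_le
  have inner_eq {h g : E → ℝ} {v : Lp ℝ 2 P} (hh : BddMeasurable h) (hv : v =ᵐ[P] g) :
      inner ℝ v ((memLp hh).toLp h) = ∫ x, h x * g x ∂P := by
    rw [L2.inner_def]
    refine integral_congr_ae ?_
    filter_upwards [(memLp hh).coeFn_toLp, hv] with x hx hvx
    simp [hx, hvx]
  refine ⟨ξ, (Lp.memLp ξ).integrable one_le_two, fun h hh => ?_⟩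
  rw [← inner_eq hh ae_eq_rfl]
  exact (hξ _).congr fun i => inner_eq hh (η_memLp i).coeFn_toLp

end WeakLimits

section CondExpTest

variable {E : Type*} {𝒢 : MeasurableSpace E} [mE : MeasurableSpace E] {P : Measure E}
  {η : E → ℝ}

lemma setIntegral_eq_integral_indicator_mul {s : Set E} (hs : MeasurableSet s) (g : E → ℝ) :
    ∫ x in s, g x ∂P = ∫ x, s.indicator (fun _ => (1 : ℝ)) x * g x ∂P := by
  rw [← integral_indicator hs]
  congr 1 with x
  by_cases hx : x ∈ s <;> simp [hx]

lemma bddMeasurable_indicator_one {s : Set E} (hs : MeasurableSet s) :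
    BddMeasurable (s.indicator fun _ => (1 : ℝ)) :=
  ⟨measurable_const.indicator hs, 1, fun x => by by_cases hx : x ∈ s <;> simp [hx]⟩

variable [IsProbabilityMeasure P]

lemma integral_mul_sub_condExp_eq_zero (h𝒢 : 𝒢 ≤ mE) {h : E → ℝ} (hη : Integrable η P)
    (hh : BddMeasurable h)
    (H : ∀ σ, Measurable[𝒢] σ → BddMeasurable σ → σ =ᵐ[P] P[h | 𝒢] →
      ∫ x, h x * η x ∂P = ∫ x, σ x * η x ∂P) :
    ∫ x, h x * (η x - (P[η | 𝒢]) x) ∂P = 0 := by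
  obtain ⟨σ, hσm, hσb, hσ⟩ := exists_bddMeasurable_condExp (P := P) h𝒢 hh
  simp only [mul_sub]
  rw [integral_sub (hh.integrable_mul hη) (hh.integrable_mul integrable_condExp), H σ hσm hσb hσ,
    ← integral_mul_condExp h𝒢 hσm hσb hη,
    integral_condExp_mul h𝒢 hh hσ stronglyMeasurable_condExp.measurable integrable_condExp,
    sub_self]

lemma ae_eq_condExp_of_forall_integral (h𝒢 : 𝒢 ≤ mE) (hη : Integrable η P)
    (H : ∀ h σ, BddMeasurable h → Measurable[𝒢] σ → BddMeasurable σ → σ =ᵐ[P] P[h | 𝒢] →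
      ∫ x, h x * η x ∂P = ∫ x, σ x * η x ∂P) :
    η =ᵐ[P] P[η | 𝒢] := by
  refine Integrable.ae_eq_of_forall_setIntegral_eq _ _ hη integrable_condExp fun s hs _ => ?_
  rw [← sub_eq_zero, ← integral_sub hη.integrableOn integrable_condExp.integrableOn,
    setIntegral_eq_integral_indicator_mul hs]
  exact integral_mul_sub_condExp_eq_zero h𝒢 hη (bddMeasurable_indicator_one hs)
    fun σ => H _ σ (bddMeasurable_indicator_one hs)

lemma ae_eq_zero_of_forall_condExp_filtration {ℱ : Filtration ℕ mE} (hℱ : ⨆ n, ℱ n = mE)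
    (hη : Integrable η P) (H : ∀ k, P[η | ℱ k] =ᵐ[P] 0) : η =ᵐ[P] 0 := by
  have hself : P[η | ⨆ n, ℱ n] =ᵐ[P] η := by
    refine condExp_of_aestronglyMeasurable' (iSup_le ℱ.le) ?_ hη
    rw [hℱ]
    exact hη.1
  filter_upwards [tendsto_ae_condExp (μ := P) (ℱ := ℱ) η, ae_all_iff.2 H, hself]
    with x hlim hzero hx
  rw [← hx]
  exact tendsto_nhds_unique hlim (tendsto_const_nhds.congr fun n => (hzero n).symm)

lemma ae_eq_condExp_of_filtration {ℱ : Filtration ℕ mE} (hℱ : ⨆ n, ℱ n = mE) (h𝒢 : 𝒢 ≤ mE)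
    (hη : Integrable η P)
    (H : ∀ k h σ, Measurable[ℱ k] h → BddMeasurable h → Measurable[𝒢] σ → BddMeasurable σ →
      σ =ᵐ[P] P[h | 𝒢] → ∫ x, h x * η x ∂P = ∫ x, σ x * η x ∂P) :
    η =ᵐ[P] P[η | 𝒢] := by
  have hgi : Integrable (fun x => η x - (P[η | 𝒢]) x) P := hη.sub integrable_condExp
  refine (ae_eq_zero_of_forall_condExp_filtration hℱ hgi fun k => ?_).mono
    fun x hx => sub_eq_zero.1 hx
  refine (ae_eq_condExp_of_forall_setIntegral_eq (ℱ.le k) hgi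
    (fun _ _ _ => integrableOn_zero) (fun s hs _ => ?_) aestronglyMeasurable_zero).symm
  have ortho := integral_mul_sub_condExp_eq_zero h𝒢 hη (bddMeasurable_indicator_one (ℱ.le k s hs))
    fun σ => H k _ σ (measurable_const.indicator hs) (bddMeasurable_indicator_one (ℱ.le k s hs))
  rw [← setIntegral_eq_integral_indicator_mul (ℱ.le k s hs)] at ortho
  simpa only [Pi.zero_apply, integral_zero] using ortho.symm

end CondExpTest

section SkewProduct

variable {B X : Type*} {𝒜 𝒟 : MeasurableSpace B} [mB : MeasurableSpace B] [mX : MeasurableSpace X]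
  {T : B ≃ᵐ B} {F : B × X ≃ᵐ B × X} {μ : Measure B} {m : Measure X} {ρ : ℕ → B × X → ℝ}
  {h : B → ℝ} {f : X → ℝ}

/-- A skew product `F` over the invertible map `T`, where `𝒜` plays the role of the future and `𝒟`
that of the past: `𝒜` increases to everything under iteration of `T`, and the fibre maps of `F`
leading to a base point are determined by its past. -/
structure IsSkewProduct {B X : Type*} (𝒜 𝒟 : MeasurableSpace B) [mB : MeasurableSpace B]
    [mX : MeasurableSpace X] (T : B ≃ᵐ B) (F : B × X ≃ᵐ B × X) : Prop where
  fst_apply : ∀ e, (F e).1 = T e.1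
  future_le : 𝒜 ≤ mB
  measurable_future : Measurable[𝒜, 𝒜] T
  iSup_future : ⨆ k : ℕ, 𝒜.comap (T.symm^[k]) = mB
  past_le : 𝒟 ≤ mB
  measurable_past : Measurable[𝒟, 𝒟] T.symm
  measurable_fibre : Measurable[𝒟.prod mX] fun e : B × X => (F (T.symm e.1, e.2)).2

/-- The correlation of a base observable with a fibre observable at time `n`. -/
noncomputable def correlation (F : B × X ≃ᵐ B × X) (μ : Measure B) (m : Measure X) (n : ℕ)
    (h : B → ℝ) (f : X → ℝ) : ℝ :=
  ∫ e, h (F^[n] e).1 * f (F^[n] e).2 ∂(μ.prod m)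

/-- The average of the correlations over the first `N` times. -/
noncomputable def cesaroCorrelation (F : B × X ≃ᵐ B × X) (μ : Measure B) (m : Measure X)
    (h : B → ℝ) (f : X → ℝ) (N : ℕ) : ℝ :=
  (∑ n ∈ Finset.range N, correlation F μ m n h f) / N

/-- The average of a fibre observable at time `n`, as a function of the base point at time `n`. -/
noncomputable def pastMean (T : B ≃ᵐ B) (F : B × X ≃ᵐ B × X) (m : Measure X) (f : X → ℝ) (n : ℕ)
    (b : B) : ℝ :=
  ∫ x, f (F^[n] (T.symm^[n] b, x)).2 ∂m

lemma bddMeasurable_tensor (hh : BddMeasurable h) (hf : BddMeasurable f) :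
    BddMeasurable fun e : B × X => h e.1 * f e.2 :=
  (hh.comp measurable_fst).mul (hf.comp measurable_snd)

lemma exists_abs_correlation_le [IsProbabilityMeasure μ] [IsProbabilityMeasure m]
    (hh : BddMeasurable h) (hf : BddMeasurable f) : ∃ C, ∀ n, |correlation F μ m n h f| ≤ C := by
  obtain ⟨C, hC⟩ := (bddMeasurable_tensor hh hf).2
  refine ⟨C, fun n => ?_⟩
  simpa [correlation] using norm_integral_le_of_norm_le_const (μ := μ.prod m)
    (f := fun e => h (F^[n] e).1 * f (F^[n] e).2) (ae_of_all _ fun e => hC (F^[n] e))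

lemma integrable_tensor_iterate [IsFiniteMeasure μ] [IsFiniteMeasure m] (hh : BddMeasurable h)
    (hf : BddMeasurable f) (n : ℕ) :
    Integrable (fun e => h (F^[n] e).1 * f (F^[n] e).2) (μ.prod m) :=
  ((bddMeasurable_tensor hh hf).comp (F.measurable.iterate n)).integrable _

lemma cesaroCorrelation_add [IsFiniteMeasure μ] [IsFiniteMeasure m] {f' : X → ℝ}
    (hh : BddMeasurable h) (hf : BddMeasurable f) (hf' : BddMeasurable f') (N : ℕ) :
    cesaroCorrelation F μ m h (fun x => f x + f' x) N =
      cesaroCorrelation F μ m h f N + cesaroCorrelation F μ m h f' N := by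
  have correlation_add (n : ℕ) : correlation F μ m n h (fun x => f x + f' x) =
      correlation F μ m n h f + correlation F μ m n h f' := by
    simp only [correlation, mul_add]
    exact integral_add (integrable_tensor_iterate hh hf n) (integrable_tensor_iterate hh hf' n)
  simp only [cesaroCorrelation, correlation_add, Finset.sum_add_distrib, add_div]

lemma cesaroCorrelation_const_mul (a : ℝ) (N : ℕ) :
    cesaroCorrelation F μ m h (fun x => a * f x) N = a * cesaroCorrelation F μ m h f N := by
  simp only [cesaroCorrelation, correlation, mul_left_comm _ a, integral_const_mul,
    ← Finset.mul_sum, mul_div_assoc]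

lemma abs_pastMean_le [IsProbabilityMeasure m] {C : ℝ} (hC : ∀ x, |f x| ≤ C) (n : ℕ) (b : B) :
    |pastMean T F m f n b| ≤ C := by
  simpa [pastMean] using norm_integral_le_of_norm_le_const (μ := m)
    (f := fun x => f (F^[n] (T.symm^[n] b, x)).2) (ae_of_all _ fun x => hC _)

lemma integral_prod_condExp_mul [IsFiniteMeasure μ] [IsFiniteMeasure m] (h𝒜 : 𝒜 ≤ mB)
    {u : B → ℝ} {σ : B × X → ℝ} (hh : BddMeasurable h) (hu : BddMeasurable u)
    (hhu : u =ᵐ[μ] μ[h | 𝒜]) (hσm : Measurable[𝒜.prod mX] σ) (hσ : BddMeasurable σ) :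
    ∫ e, u e.1 * σ e ∂(μ.prod m) = ∫ e, h e.1 * σ e ∂(μ.prod m) := by
  rw [integral_prod_symm _ (((hu.comp measurable_fst).mul hσ).integrable _),
    integral_prod_symm _ (((hh.comp measurable_fst).mul hσ).integrable _)]
  congr 1 with x
  have section_measurable : Measurable[𝒜] fun b => σ (b, x) :=
    hσm.comp (@measurable_prodMk_right _ _ 𝒜 mX x)
  exact integral_condExp_mul h𝒜 hh hhu section_measurable
    ((hσ.comp measurable_prodMk_right).integrable μ)

lemma integral_tensor_mul_condExp [IsFiniteMeasure μ] [IsFiniteMeasure m] (h𝒜 : 𝒜 ≤ mB)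
    {u : B → ℝ} {g : B × X → ℝ} (hh : BddMeasurable h) (hum : Measurable[𝒜] u)
    (hu : BddMeasurable u) (hhu : u =ᵐ[μ] μ[h | 𝒜]) (hf : BddMeasurable f) (hg : BddMeasurable g) :
    ∫ e, h e.1 * f e.2 * ((μ.prod m)[g|𝒜.prod mX]) e ∂(μ.prod m) =
      ∫ e, u e.1 * f e.2 * g e ∂(μ.prod m) := by
  have h𝒢 : 𝒜.prod mX ≤ mB.prod mX := sup_le_sup_right (MeasurableSpace.comap_mono h𝒜) _
  obtain ⟨σ, hσm, hσ, hσg⟩ := exists_bddMeasurable_condExp (P := μ.prod m) h𝒢 hg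
  have hfm : Measurable[𝒜.prod mX] fun e : B × X => f e.2 :=
    hf.1.comp (@measurable_snd _ _ 𝒜 mX)
  have hufm : Measurable[𝒜.prod mX] fun e : B × X => u e.1 * f e.2 :=
    (hum.comp (@measurable_fst _ _ 𝒜 mX)).mul hfm
  calc ∫ e, h e.1 * f e.2 * ((μ.prod m)[g|𝒜.prod mX]) e ∂(μ.prod m)
      = ∫ e, h e.1 * (f e.2 * σ e) ∂(μ.prod m) := by
        refine integral_congr_ae ?_
        filter_upwards [hσg] with e he
        rw [he, mul_assoc]
    _ = ∫ e, u e.1 * (f e.2 * σ e) ∂(μ.prod m) :=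
        (integral_prod_condExp_mul h𝒜 hh hu hhu (hfm.mul hσm)
          ((hf.comp measurable_snd).mul hσ)).symm
    _ = ∫ e, σ e * (u e.1 * f e.2) ∂(μ.prod m) := by
        congr 1 with e
        ring
    _ = ∫ e, u e.1 * f e.2 * g e ∂(μ.prod m) := by
        rw [integral_condExp_mul h𝒢 hg hσg hufm ((bddMeasurable_tensor hu hf).integrable _)]
        simp only [mul_comm]

namespace IsSkewProduct

lemma fst_iterate (hS : IsSkewProduct 𝒜 𝒟 T F) (n : ℕ) (e : B × X) :
    (F^[n] e).1 = T^[n] e.1 := by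
  induction n generalizing e with
  | zero => rfl
  | succ n ih => rw [Function.iterate_succ_apply, ih, hS.fst_apply, Function.iterate_succ_apply]

lemma measurable_snd_iterate (hS : IsSkewProduct 𝒜 𝒟 T F) (n : ℕ) :
    Measurable[𝒟.prod mX] fun e : B × X => (F^[n] (T.symm^[n] e.1, e.2)).2 := by
  induction n with
  | zero => exact @measurable_snd _ _ 𝒟 mX
  | succ n ih =>
    have previous : Measurable[𝒟.prod mX] fun e : B × X =>
        (F^[n] (T.symm^[n] (T.symm e.1), e.2)).2 :=
      ih.comp ((hS.measurable_past.comp (@measurable_fst _ _ 𝒟 mX)).prodMk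
        (@measurable_snd _ _ 𝒟 mX))
    have last_step (e : B × X) : (F^[n + 1] (T.symm^[n + 1] e.1, e.2)).2 =
        (F (T.symm e.1, (F^[n] (T.symm^[n] (T.symm e.1), e.2)).2)).2 := by
      rw [Function.iterate_succ_apply', ← Function.iterate_succ_apply T.symm]
      congr 2
      refine Prod.ext ?_ rfl
      rw [hS.fst_iterate, Function.iterate_succ_apply]
      exact symm_iterate_iterate T.symm n _
    simp only [last_step]
    exact hS.measurable_fibre.comp ((@measurable_fst _ _ 𝒟 mX).prodMk previous)

lemma measurable_pastMean [SFinite m] (hS : IsSkewProduct 𝒜 𝒟 T F) (hf : Measurable f) (n : ℕ) :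
    Measurable[𝒟] (pastMean T F m f n) := by
  have integrand := (hf.comp (hS.measurable_snd_iterate n)).stronglyMeasurable
  exact (@StronglyMeasurable.integral_prod_right _ _ _ 𝒟 mX m _ _ _
    (fun b x => f (F^[n] (T.symm^[n] b, x)).2) integrand).measurable

lemma correlation_eq_integral_pastMean [IsProbabilityMeasure μ] [IsProbabilityMeasure m]
    (hS : IsSkewProduct 𝒜 𝒟 T F) (hT : MeasurePreserving T μ μ) (hh : BddMeasurable h)
    (hf : BddMeasurable f) (n : ℕ) :
    correlation F μ m n h f = ∫ b, h b * pastMean T F m f n b ∂μ := by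
  rw [← (hT.iterate n).integral_comp (measurableEmbedding_iterate T n), correlation,
    integral_prod _ (((bddMeasurable_tensor hh hf).comp (F.measurable.iterate n)).integrable _)]
  simp only [pastMean, symm_iterate_iterate, hS.fst_iterate, integral_const_mul]

/-- The filtration of the σ-algebras generated by the coordinates from time `-k` on. -/
def futureFiltration (hS : IsSkewProduct 𝒜 𝒟 T F) : Filtration ℕ mB where
  seq k := 𝒜.comap (T.symm^[k])
  mono' := monotone_nat_of_le_succ fun k => by
    have hk : T.symm^[k] = T ∘ T.symm^[k + 1] := by
      funext b
      rw [Function.comp_apply, Function.iterate_succ_apply', T.apply_symm_apply]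
    rw [hk, ← MeasurableSpace.comap_comp]
    exact MeasurableSpace.comap_mono hS.measurable_future.comap_le
  le' k := ((T.symm.measurable.iterate k).mono le_rfl hS.future_le).comap_le

lemma measurable_comp_iterate (hS : IsSkewProduct 𝒜 𝒟 T F) {k : ℕ}
    (hh : Measurable[hS.futureFiltration k] h) : Measurable[𝒜] fun b => h (T^[k] b) := by
  refine hh.comp (measurable_comap_iff.2 ?_)
  simpa only [Function.comp_def, symm_iterate_iterate] using @measurable_id' _ 𝒜

variable [IsProbabilityMeasure μ] [IsProbabilityMeasure m]

lemma tendsto_cesaro_correlation_sub (hS : IsSkewProduct 𝒜 𝒟 T F)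
    (hQ : QuasiInvariant (𝒜.prod mX) (μ.prod m) F ρ)
    (hent : Tendsto (fun N : ℕ => entropy (μ.prod m) (ρ N) / N) atTop (𝓝 0)) {k : ℕ} {u : B → ℝ}
    (hhm : Measurable[hS.futureFiltration k] h) (hh : BddMeasurable h) (hum : Measurable[𝒜] u)
    (hu : BddMeasurable u) (hhu : u =ᵐ[μ] μ[h | 𝒜]) (hf : BddMeasurable f) :
    Tendsto (fun N : ℕ => (∑ n ∈ Finset.range N,
      (correlation F μ m (n + k) h f - correlation F μ m (n + k) u f)) / N) atTop (𝓝 0) := by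
  have hΦm : Measurable[𝒜.prod mX] fun e => h (F^[k] e).1 * f (F^[k] e).2 := by
    simp only [hS.fst_iterate]
    exact ((hS.measurable_comp_iterate hhm).comp (@measurable_fst _ _ 𝒜 mX)).mul
      (hf.1.comp ((@measurable_snd _ _ 𝒜 mX).comp (hQ.measurable_iterate k)))
  refine (hQ.cesaro_sub_condExp hent k (bddMeasurable_tensor hh hf) hΦm).congr fun N => ?_
  congr 1
  refine Finset.sum_congr rfl fun n _ => ?_
  rw [correlation, correlation, hQ.transfer (n + k) fun e => h e.1 * f e.2,
    hQ.transfer (n + k) fun e => u e.1 * f e.2,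
    integral_tensor_mul_condExp hS.future_le hh hum hu hhu hf (hQ.pinched (n + k)).bdd]

lemma exists_weak_limit_correlation (hS : IsSkewProduct 𝒜 𝒟 T F) (hT : MeasurePreserving T μ μ)
    (hf : BddMeasurable f) :
    ∃ η : B → ℝ, Integrable η μ ∧ (∀ h, BddMeasurable h →
      Tendsto (cesaroCorrelation F μ m h f) (hyperfilter ℕ) (𝓝 (∫ b, h b * η b ∂μ))) ∧
      η =ᵐ[μ] μ[η | 𝒟] := by
  obtain ⟨C, hC0, hC⟩ := hf.exists_nonneg_bound
  let avg (N : ℕ) (b : B) : ℝ := (∑ n ∈ Finset.range N, pastMean T F m f n b) / N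
  have avg_measurable (N : ℕ) : Measurable[𝒟] (avg N) :=
    (Finset.measurable_fun_sum _ fun n _ => hS.measurable_pastMean hf.1 n).div_const _
  have avg_le (N : ℕ) (b : B) : |avg N b| ≤ C := by
    rw [abs_div, Nat.abs_cast]
    refine div_le_of_le_mul₀ (Nat.cast_nonneg N) hC0 ((Finset.abs_sum_le_sum_abs _ _).trans
      ((Finset.sum_le_card_nsmul _ _ C fun n _ => abs_pastMean_le hC n b).trans_eq ?_))
    rw [Finset.card_range, nsmul_eq_mul, mul_comm]
  have avg_bdd (N : ℕ) : BddMeasurable (avg N) :=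
    ⟨(avg_measurable N).mono hS.past_le le_rfl, C, avg_le N⟩
  have pastMean_bdd (n : ℕ) : BddMeasurable (pastMean T F m f n) :=
    ⟨(hS.measurable_pastMean hf.1 n).mono hS.past_le le_rfl, C, abs_pastMean_le hC n⟩
  obtain ⟨η, hη, hlim⟩ := exists_weak_limit μ (hyperfilter ℕ) (fun N => (avg_bdd N).1) avg_le
  refine ⟨η, hη, fun h hh => (hlim h hh).congr fun N => ?_, ?_⟩
  · simp only [cesaroCorrelation, avg, mul_div_assoc', Finset.mul_sum, integral_div,
      hS.correlation_eq_integral_pastMean hT hh hf]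
    rw [integral_finsetSum _ fun n _ => (hh.mul (pastMean_bdd n)).integrable μ]
  · refine ae_eq_condExp_of_forall_integral hS.past_le hη fun h σ hh _ hσ hhσ => ?_
    exact tendsto_nhds_unique (hlim h hh) ((hlim σ hσ).congr fun N =>
      integral_condExp_mul hS.past_le hh hhσ (avg_measurable N) ((avg_bdd N).integrable μ))

theorem exists_fibre_density (hS : IsSkewProduct 𝒜 𝒟 T F) (hT : MeasurePreserving T μ μ)
    (hQ : QuasiInvariant (𝒜.prod mX) (μ.prod m) F ρ)
    (hent : Tendsto (fun N : ℕ => entropy (μ.prod m) (ρ N) / N) atTop (𝓝 0))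
    (hf : BddMeasurable f) :
    ∃ η : B → ℝ, Integrable η μ ∧ (∀ h, BddMeasurable h →
      Tendsto (cesaroCorrelation F μ m h f) (hyperfilter ℕ) (𝓝 (∫ b, h b * η b ∂μ))) ∧
      η =ᵐ[μ] μ[η | 𝒟] ∧ η =ᵐ[μ] μ[η | 𝒜] := by
  obtain ⟨η, hη, hlim, past⟩ := hS.exists_weak_limit_correlation (m := m) hT hf
  refine ⟨η, hη, hlim, past, ae_eq_condExp_of_filtration (ℱ := hS.futureFiltration)
    hS.iSup_future hS.future_le hη fun k h σ hhm hh hσm hσ hhσ => ?_⟩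
  obtain ⟨C, hC⟩ := exists_abs_correlation_le (F := F) (μ := μ) (m := m) hh hf
  obtain ⟨D, hD⟩ := exists_abs_correlation_le (F := F) (μ := μ) (m := m) hσ hf
  have swap := hS.tendsto_cesaro_correlation_sub hQ hent hhm hh hσm hσ hhσ hf
  have unshift := (swap.sub (tendsto_cesaro_sub_shift (tendsto_div_of_forall_abs_le hC) k)).add
    (tendsto_cesaro_sub_shift (tendsto_div_of_forall_abs_le hD) k)
  have compare := (unshift.mono_left Nat.hyperfilter_le_atTop).add (hlim σ hσ)
  simp only [sub_zero, add_zero, zero_add] at compare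
  refine tendsto_nhds_unique (hlim h hh) (compare.congr fun N => ?_)
  simp only [cesaroCorrelation, Finset.sum_sub_distrib, sub_div]
  ring

end IsSkewProduct

end SkewProduct

section Shift

lemma shift_iterate_apply (n : ℕ) (ω : ℤ → ℕ) (i : ℤ) : shift^[n] ω i = ω (i + n) := by
  induction n generalizing ω with
  | zero => simp
  | succ n ih =>
    rw [Function.iterate_succ_apply, ih, shift]
    push_cast
    ring_nf

/-- The shift as an automorphism of the measurable space of two-sided sequences. -/
def shiftEquiv : (ℤ → ℕ) ≃ᵐ (ℤ → ℕ) where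
  toFun := shift
  invFun ω n := ω (n - 1)
  left_inv ω := funext fun n => by simp [shift]
  right_inv ω := funext fun n => by simp [shift]
  measurable_toFun := measurable_pi_lambda _ fun _ => measurable_pi_apply _
  measurable_invFun := measurable_pi_lambda _ fun _ => measurable_pi_apply _

lemma coe_shiftEquiv : ⇑shiftEquiv = shift := rfl

lemma shiftEquiv_symm_apply (ω : ℤ → ℕ) (i : ℤ) : shiftEquiv.symm ω i = ω (i - 1) := rfl

lemma shiftEquiv_symm_iterate_apply (n : ℕ) (ω : ℤ → ℕ) (i : ℤ) :
    shiftEquiv.symm^[n] ω i = ω (i - n) := by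
  induction n generalizing ω with
  | zero => simp
  | succ n ih =>
    rw [Function.iterate_succ_apply, ih, shiftEquiv_symm_apply]
    push_cast
    ring_nf

lemma measurable_projPlus : Measurable projPlus :=
  measurable_pi_lambda _ fun _ => measurable_pi_apply _

lemma measurable_projMinus : Measurable projMinus :=
  measurable_pi_lambda _ fun _ => measurable_pi_apply _

/-- The σ-algebra generated by the nonnegative coordinates. -/
abbrev futureAlgebra : MeasurableSpace (ℤ → ℕ) := MeasurableSpace.comap projPlus inferInstance

/-- The σ-algebra generated by the nonpositive coordinates. -/
abbrev pastAlgebra : MeasurableSpace (ℤ → ℕ) := MeasurableSpace.comap projMinus inferInstance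

lemma measurable_future_coord (n : ℕ) : Measurable[futureAlgebra] fun ω : ℤ → ℕ => ω n :=
  (measurable_pi_apply n).comp (comap_measurable projPlus)

lemma measurable_past_coord (n : ℕ) : Measurable[pastAlgebra] fun ω : ℤ → ℕ => ω (-n) :=
  (measurable_pi_apply n).comp (comap_measurable projMinus)

lemma measurable_future_shift : Measurable[futureAlgebra, futureAlgebra] shift :=
  measurable_comap_iff.2 <| @measurable_pi_lambda _ _ _ futureAlgebra _ _ fun n => by
    simpa only [Function.comp_apply, projPlus, shift, Nat.cast_add, Nat.cast_one] using
      measurable_future_coord (n + 1)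

lemma measurable_past_shift_symm : Measurable[pastAlgebra, pastAlgebra] shiftEquiv.symm :=
  measurable_comap_iff.2 <| @measurable_pi_lambda _ _ _ pastAlgebra _ _ fun n => by
    simpa only [Function.comp_apply, projMinus, shiftEquiv_symm_apply, Nat.cast_add, Nat.cast_one,
      neg_add, sub_eq_add_neg] using measurable_past_coord (n + 1)

lemma iSup_comap_shift_symm_iterate :
    ⨆ k : ℕ, futureAlgebra.comap (shiftEquiv.symm^[k]) = MeasurableSpace.pi := by
  refine le_antisymm (iSup_le fun k => ?_) (iSup_le fun i => ?_)
  · exact ((shiftEquiv.symm.measurable.iterate k).mono le_rfl measurable_projPlus.comap_le).comap_le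
  · have coord : Measurable[futureAlgebra.comap (shiftEquiv.symm^[i.natAbs])]
        fun ω : ℤ → ℕ => ω i := by
      have := (measurable_future_coord (i + i.natAbs).toNat).comp
        (@comap_measurable _ _ futureAlgebra (shiftEquiv.symm^[i.natAbs]))
      refine cast (congrArg _ (funext fun ω => ?_)) this
      rw [Function.comp_apply, shiftEquiv_symm_iterate_apply]
      congr 1
      omega
    exact coord.comap_le.trans (le_iSup (fun k : ℕ => futureAlgebra.comap (shiftEquiv.symm^[k])) _)

end Shift

section Words

/-- The product of the elements attached to the letters `ω 0, …, ω (n - 1)`, the last letter being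
the leftmost factor. -/
def wordProd {H : Type*} [Monoid H] (g : ℕ → H) (ω : ℤ → ℕ) : ℕ → H
  | 0 => 1
  | n + 1 => g (ω n) * wordProd g ω n

lemma map_wordProd {H K : Type*} [Monoid H] [Monoid K] (φ : H →* K) (g : ℕ → H) (ω : ℤ → ℕ)
    (n : ℕ) : φ (wordProd g ω n) = wordProd (fun b => φ (g b)) ω n := by
  induction n with
  | zero => exact φ.map_one
  | succ n ih => rw [wordProd, wordProd, φ.map_mul, ih]

variable {H X : Type*} [Group H] [mX : MeasurableSpace X] [MulAction H X] [MeasurableConstSMul H X]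
  {g : ℕ → H}

lemma measurable_letter_smul {𝒞 : MeasurableSpace (ℤ → ℕ)} {i : ℤ}
    (hi : Measurable[𝒞] fun ω : ℤ → ℕ => ω i) (g : ℕ → H) :
    Measurable[𝒞.prod mX] fun e : (ℤ → ℕ) × X => g (e.1 i) • e.2 :=
  (measurable_from_prod_countable_right fun b => measurable_const_smul (g b) :
    Measurable fun c : ℕ × X => g c.1 • c.2).comp
    ((hi.comp (@measurable_fst _ _ 𝒞 mX)).prodMk (@measurable_snd _ _ 𝒞 mX))

/-- The skew product over the shift in which the letter at the origin acts on the fibre. -/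
def letterSkewProduct (X : Type*) [MeasurableSpace X] [MulAction H X] [MeasurableConstSMul H X]
    (g : ℕ → H) : ((ℤ → ℕ) × X) ≃ᵐ ((ℤ → ℕ) × X) where
  toFun e := (shiftEquiv e.1, g (e.1 0) • e.2)
  invFun e := (shiftEquiv.symm e.1, (g (e.1 (-1)))⁻¹ • e.2)
  left_inv e := by
    refine Prod.ext (shiftEquiv.symm_apply_apply e.1) ?_
    simp [coe_shiftEquiv, shift]
  right_inv e := by
    refine Prod.ext (shiftEquiv.apply_symm_apply e.1) ?_
    simp [shiftEquiv_symm_apply]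
  measurable_toFun := (shiftEquiv.measurable.comp measurable_fst).prodMk
    (measurable_letter_smul (measurable_pi_apply 0) g)
  measurable_invFun := (shiftEquiv.symm.measurable.comp measurable_fst).prodMk
    (measurable_letter_smul (measurable_pi_apply (-1)) fun b => (g b)⁻¹)

lemma letterSkewProduct_apply (e : (ℤ → ℕ) × X) :
    letterSkewProduct X g e = (shift e.1, g (e.1 0) • e.2) := rfl

lemma letterSkewProduct_iterate (n : ℕ) (e : (ℤ → ℕ) × X) :
    (letterSkewProduct X g)^[n] e = (shift^[n] e.1, wordProd g e.1 n • e.2) := by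
  induction n with
  | zero => simp [wordProd]
  | succ n ih =>
    rw [Function.iterate_succ_apply', ih, letterSkewProduct_apply, Function.iterate_succ_apply',
      wordProd, mul_smul]
    simp only [shift_iterate_apply, zero_add]

lemma measurable_future_letterSkewProduct :
    Measurable[futureAlgebra.prod mX, futureAlgebra.prod mX] (letterSkewProduct X g) :=
  (measurable_future_shift.comp (@measurable_fst _ _ futureAlgebra mX)).prodMk
    (measurable_letter_smul (measurable_future_coord 0) g)

lemma isSkewProduct_letterSkewProduct :
    IsSkewProduct futureAlgebra pastAlgebra shiftEquiv (letterSkewProduct X g) where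
  fst_apply _ := rfl
  future_le := measurable_projPlus.comap_le
  measurable_future := measurable_future_shift
  iSup_future := iSup_comap_shift_symm_iterate
  past_le := measurable_projMinus.comap_le
  measurable_past := measurable_past_shift_symm
  measurable_fibre := by
    simp only [letterSkewProduct_apply, shiftEquiv_symm_apply, zero_sub]
    exact measurable_letter_smul (measurable_past_coord 1) g

end Words

section EntrySum

/-- The sum of the absolute values of the entries of a matrix: a submultiplicative norm. -/
noncomputable def entrySum (M : Matrix (Fin 2) (Fin 2) ℝ) : ℝ := ∑ i, ∑ j, |M i j|

variable (M N : Matrix (Fin 2) (Fin 2) ℝ)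

lemma entrySum_eq : entrySum M = |M 0 0| + |M 0 1| + (|M 1 0| + |M 1 1|) := by
  simp only [entrySum, Fin.sum_univ_two]

lemma entrySum_nonneg : 0 ≤ entrySum M := by
  rw [entrySum]
  positivity

lemma row_le_entrySum (i : Fin 2) : ∑ j, |M i j| ≤ entrySum M :=
  Finset.single_le_sum (f := fun i => ∑ j, |M i j|)
    (fun i _ => Finset.sum_nonneg fun j _ => abs_nonneg (M i j)) (Finset.mem_univ i)

lemma entrySum_mul_le : entrySum (M * N) ≤ entrySum M * entrySum N :=
  calc entrySum (M * N)
      ≤ ∑ i, ∑ j, ∑ k, |M i k| * |N k j| := by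
        simp only [entrySum, Matrix.mul_apply, ← abs_mul]
        gcongr
        exact Finset.abs_sum_le_sum_abs _ _
    _ = ∑ i, ∑ k, |M i k| * ∑ j, |N k j| := by
        refine Finset.sum_congr rfl fun i _ => ?_
        rw [Finset.sum_comm]
        simp only [Finset.mul_sum]
    _ ≤ ∑ i, ∑ k, |M i k| * entrySum N := by
        gcongr with i _ k _
        exact row_le_entrySum N k
    _ = entrySum M * entrySum N := by simp only [entrySum, Finset.sum_mul]

lemma norm_mulVec_le_entrySum (x : Fin 2 → ℝ) : ‖M *ᵥ x‖ ≤ entrySum M * ‖x‖ := by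
  refine (pi_norm_le_iff_of_nonneg (mul_nonneg (entrySum_nonneg M) (norm_nonneg x))).2 fun i => ?_
  calc ‖(M *ᵥ x) i‖ = |∑ j, M i j * x j| := rfl
    _ ≤ ∑ j, |M i j * x j| := Finset.abs_sum_le_sum_abs _ _
    _ ≤ ∑ j, |M i j| * ‖x‖ := by
        gcongr with j _
        rw [abs_mul]
        gcongr
        exact norm_le_pi_norm x j
    _ ≤ entrySum M * ‖x‖ := by
        rw [← Finset.sum_mul]
        gcongr
        exact row_le_entrySum M i

lemma entrySum_adjugate : entrySum M.adjugate = entrySum M := by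
  simp only [entrySum_eq, Matrix.adjugate_fin_two, Matrix.of_apply, Matrix.cons_val',
    Matrix.cons_val_zero, Matrix.cons_val_one, Matrix.cons_val_fin_one, abs_neg]
  ring

variable {M} in
lemma one_le_entrySum (hM : M.det = 1) : 1 ≤ entrySum M := by
  rw [Matrix.det_fin_two] at hM
  have det_le : 1 ≤ |M 0 0| * |M 1 1| + |M 0 1| * |M 1 0| := by
    rw [← abs_mul, ← abs_mul, ← hM]
    linarith [le_abs_self (M 0 0 * M 1 1), neg_abs_le (M 0 1 * M 1 0)]
  rw [entrySum_eq]
  by_contra! entrySum_lt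
  nlinarith [abs_nonneg (M 0 0), abs_nonneg (M 0 1), abs_nonneg (M 1 0), abs_nonneg (M 1 1),
    mul_nonneg (abs_nonneg (M 0 0)) (abs_nonneg (M 1 1)),
    mul_nonneg (abs_nonneg (M 0 1)) (abs_nonneg (M 1 0))]

end EntrySum

section PlanarCocycle

open scoped MatrixGroups

variable {G : ℕ → SL(2, ℝ)}

lemma SL_smul_eq_mulVec (M : SL(2, ℝ)) (x : Fin 2 → ℝ) :
    M • x = (M : Matrix (Fin 2) (Fin 2) ℝ) *ᵥ x := rfl

instance measurableConstSMul_SL : MeasurableConstSMul SL(2, ℝ) (Fin 2 → ℝ) where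
  measurable_const_smul M :=
    ((M : Matrix (Fin 2) (Fin 2) ℝ).mulVecLin.continuous_of_finiteDimensional).measurable

lemma entrySum_inv (M : SL(2, ℝ)) : entrySum (M⁻¹ : SL(2, ℝ)) = entrySum M :=
  entrySum_adjugate M

lemma one_le_entrySum_SL (M : SL(2, ℝ)) : 1 ≤ entrySum M := one_le_entrySum M.2

lemma exists_entrySum_wordProd_le (hG : ∃ K, ∀ b, entrySum (G b) ≤ K) (n : ℕ) :
    ∃ K, ∀ ω, entrySum ↑(wordProd G ω n) ≤ K := by
  obtain ⟨K, hK⟩ := hG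
  induction n with
  | zero => exact ⟨entrySum (1 : SL(2, ℝ)), fun ω => le_rfl⟩
  | succ n ih =>
    obtain ⟨D, hD⟩ := ih
    refine ⟨K * D, fun ω => (entrySum_mul_le _ _).trans ?_⟩
    exact mul_le_mul (hK _) (hD ω) (entrySum_nonneg _) ((entrySum_nonneg _).trans (hK 0))

lemma measurable_wordProd_apply (n : ℕ) (i j : Fin 2) :
    Measurable fun ω : ℤ → ℕ => wordProd G ω n i j := by
  induction n generalizing i j with
  | zero => exact measurable_const
  | succ n ih =>
    simp only [wordProd, Matrix.SpecialLinearGroup.coe_mul, Matrix.mul_apply]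
    exact Finset.measurable_fun_sum _ fun l _ =>
      ((measurable_from_nat (f := fun b => G b i l)).comp (measurable_pi_apply (n : ℤ))).mul
        (ih l j)

lemma measurable_entrySum_wordProd (n : ℕ) :
    Measurable fun ω : ℤ → ℕ => entrySum ↑(wordProd G ω n) :=
  Finset.measurable_fun_sum _ fun i _ => Finset.measurable_fun_sum _ fun j _ =>
    (measurable_wordProd_apply n i j).abs

lemma measurePreserving_SL_smul (M : SL(2, ℝ)) :
    MeasurePreserving (fun x : Fin 2 → ℝ => M • x) volume volume := by
  refine ⟨measurable_const_smul M, ?_⟩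
  have h := Real.map_matrix_volume_pi_eq_smul_volume_pi (M := (M : Matrix (Fin 2) (Fin 2) ℝ))
    (by simp)
  rwa [M.det_coe, inv_one, abs_one, ENNReal.ofReal_one, one_smul] at h

/-- A strictly positive probability density on the plane which a matrix `M` distorts by a factor
of at most `entrySum M ^ 3`. -/
noncomputable def confDensity (x : Fin 2 → ℝ) : ℝ :=
  ((1 + ‖x‖) ^ 3)⁻¹ / ∫ y : Fin 2 → ℝ, ((1 + ‖y‖) ^ 3)⁻¹

lemma integrable_inv_one_add_norm_cube : Integrable fun x : Fin 2 → ℝ => ((1 + ‖x‖) ^ 3)⁻¹ := by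
  have h := integrable_one_add_norm (E := Fin 2 → ℝ) (μ := volume) (r := 3) (by simp; norm_num)
  refine h.congr (ae_of_all _ fun x => ?_)
  simp only [rpow_neg (show (0 : ℝ) ≤ 1 + ‖x‖ by positivity)]
  norm_cast

lemma integral_inv_one_add_norm_cube_pos : 0 < ∫ x : Fin 2 → ℝ, ((1 + ‖x‖) ^ 3)⁻¹ := by
  rw [integral_pos_iff_support_of_nonneg (fun x => by positivity) integrable_inv_one_add_norm_cube,
    Function.support_eq_univ fun x => by positivity]
  simp

lemma confDensity_pos (x : Fin 2 → ℝ) : 0 < confDensity x :=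
  div_pos (by positivity) integral_inv_one_add_norm_cube_pos

lemma measurable_confDensity : Measurable confDensity := by
  unfold confDensity
  fun_prop

lemma confDensity_div_smul_le (M : SL(2, ℝ)) (x : Fin 2 → ℝ) :
    confDensity x / confDensity (M • x) ≤ entrySum M ^ 3 := by
  have ratio : confDensity x / confDensity (M • x) = ((1 + ‖M • x‖) / (1 + ‖x‖)) ^ 3 := by
    rw [confDensity, confDensity, div_div_div_cancel_right₀ integral_inv_one_add_norm_cube_pos.ne',
      inv_div_inv, div_pow]
  rw [ratio, SL_smul_eq_mulVec]
  gcongr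
  rw [div_le_iff₀ (by positivity)]
  linarith [norm_mulVec_le_entrySum M x, one_le_entrySum_SL M]

/-- The probability measure with density `confDensity`. -/
noncomputable def confMeasure : Measure (Fin 2 → ℝ) :=
  volume.withDensity fun x => ENNReal.ofReal (confDensity x)

instance isProbabilityMeasure_confMeasure : IsProbabilityMeasure confMeasure := by
  refine ⟨?_⟩
  rw [confMeasure, withDensity_apply _ MeasurableSet.univ, Measure.restrict_univ]
  simp only [confDensity]
  rw [← ofReal_integral_eq_lintegral_ofReal (integrable_inv_one_add_norm_cube.div_const _)
      (ae_of_all _ fun x => (confDensity_pos x).le), integral_div,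
    div_self integral_inv_one_add_norm_cube_pos.ne', ENNReal.ofReal_one]

variable {μ : Measure (ℤ → ℕ)}

lemma measurePreserving_letterSkewProduct [SFinite μ] (hμ : MeasurePreserving shift μ μ) :
    MeasurePreserving (letterSkewProduct (Fin 2 → ℝ) G) (μ.prod volume) (μ.prod volume) :=
  hμ.skew_product (g := fun ω x => G (ω 0) • x) (measurable_letter_smul (measurable_pi_apply 0) G)
    (ae_of_all _ fun ω => (measurePreserving_SL_smul (G (ω 0))).map_eq)

lemma pinched_confDensity_letterSkewProduct (hG : ∃ K, ∀ b, entrySum (G b) ≤ K) :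
    Pinched fun e =>
      confDensity ((letterSkewProduct (Fin 2 → ℝ) G).symm e).2 / confDensity e.2 := by
  obtain ⟨K, hK⟩ := hG
  have hK0 : 0 < K := one_pos.trans_le ((one_le_entrySum_SL (G 0)).trans (hK 0))
  have bound (M : SL(2, ℝ)) (hM : entrySum M ≤ K) (x : Fin 2 → ℝ) :
      confDensity x / confDensity (M • x) ≤ K ^ 3 :=
    (confDensity_div_smul_le M x).trans (pow_le_pow_left₀ (entrySum_nonneg _) hM 3)
  refine ⟨(measurable_confDensity.comp (measurable_snd.comp
    (letterSkewProduct (Fin 2 → ℝ) G).symm.measurable)).div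
      (measurable_confDensity.comp measurable_snd), K ^ 3, by positivity,
    (letterSkewProduct (Fin 2 → ℝ) G).surjective.forall.2 fun e => ?_⟩
  beta_reduce
  rw [MeasurableEquiv.symm_apply_apply, letterSkewProduct_apply]
  refine ⟨?_, bound _ (hK _) _⟩
  rw [inv_le_comm₀ (pow_pos hK0 3) (div_pos (confDensity_pos _) (confDensity_pos _)), inv_div]
  simpa only [inv_smul_smul] using
    bound (G (e.1 0))⁻¹ ((entrySum_inv _).trans_le (hK _)) (G (e.1 0) • e.2)

/-- The density, with respect to `μ.prod confMeasure`, of the push-forward of that measure under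
the `n`-th iterate of the skew product. -/
noncomputable def skewDensity (G : ℕ → SL(2, ℝ)) (n : ℕ) (e : (ℤ → ℕ) × (Fin 2 → ℝ)) : ℝ :=
  confDensity ((letterSkewProduct (Fin 2 → ℝ) G).symm^[n] e).2 / confDensity e.2

lemma quasiInvariant_letterSkewProduct [SFinite μ] (hμ : MeasurePreserving shift μ μ)
    (hG : ∃ K, ∀ b, entrySum (G b) ≤ K) :
    QuasiInvariant (futureAlgebra.prod MeasurableSpace.pi) (μ.prod confMeasure)
      (letterSkewProduct (Fin 2 → ℝ) G) (skewDensity G) := by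
  have hθ : Measurable[futureAlgebra.prod MeasurableSpace.pi]
      fun e : (ℤ → ℕ) × (Fin 2 → ℝ) => confDensity e.2 :=
    measurable_confDensity.comp (@measurable_snd _ _ futureAlgebra _)
  have hle : futureAlgebra.prod MeasurableSpace.pi ≤
      (inferInstance : MeasurableSpace ((ℤ → ℕ) × (Fin 2 → ℝ))) :=
    sup_le_sup_right (MeasurableSpace.comap_mono measurable_projPlus.comap_le) _
  have hQ := QuasiInvariant.of_density (measurePreserving_letterSkewProduct (G := G) hμ)
    (hθ.mono hle le_rfl) (fun e => confDensity_pos e.2)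
    (pinched_confDensity_letterSkewProduct hG) hle
    measurable_future_letterSkewProduct hθ
  rw [confMeasure, prod_withDensity_right measurable_confDensity.ennreal_ofReal]
  exact hQ

lemma integrable_log_entrySum_wordProd [IsFiniteMeasure μ] (hG : ∃ K, ∀ b, entrySum (G b) ≤ K)
    (n : ℕ) : Integrable (fun ω => log (entrySum ↑(wordProd G ω n))) μ := by
  obtain ⟨K, hK⟩ := exists_entrySum_wordProd_le hG n
  refine .of_bound (C := log K) (measurable_entrySum_wordProd n).log.aestronglyMeasurable
    (ae_of_all _ fun ω => ?_)
  have one_le := one_le_entrySum_SL (wordProd G ω n)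
  rw [norm_eq_abs, abs_of_nonneg (log_nonneg one_le)]
  exact log_le_log (one_pos.trans_le one_le) (hK ω)

lemma entropy_skewDensity_le [IsProbabilityMeasure μ] (hμ : MeasurePreserving shift μ μ)
    (hG : ∃ K, ∀ b, entrySum (G b) ≤ K) (n : ℕ) :
    entropy (μ.prod confMeasure) (skewDensity G n) ≤
      3 * ∫ ω, log (entrySum ↑(wordProd G ω n)) ∂μ := by
  have hQ := quasiInvariant_letterSkewProduct hμ hG
  have jacobian_le (e : (ℤ → ℕ) × (Fin 2 → ℝ)) :
      log (skewDensity G n ((letterSkewProduct (Fin 2 → ℝ) G)^[n] e)) ≤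
        3 * log (entrySum ↑(wordProd G e.1 n)) := by
    rw [skewDensity, symm_iterate_iterate, letterSkewProduct_iterate,
      show (3 : ℝ) = (3 : ℕ) by norm_num, ← log_pow]
    exact log_le_log (div_pos (confDensity_pos _) (confDensity_pos _)) (confDensity_div_smul_le _ _)
  rw [hQ.entropy_density, ← integral_const_mul]
  refine (integral_mono (((hQ.pinched n).comp
    ((letterSkewProduct (Fin 2 → ℝ) G).measurable.iterate n)).log.integrable _)
    (((integrable_log_entrySum_wordProd hG n).const_mul 3).comp_fst _) jacobian_le).trans_eq ?_
  rw [integral_fun_fst (fun ω => 3 * log (entrySum ↑(wordProd G ω n))), probReal_univ,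
    one_smul]

lemma tendsto_entropy_skewDensity [IsProbabilityMeasure μ] (hμ : MeasurePreserving shift μ μ)
    (hG : ∃ K, ∀ b, entrySum (G b) ≤ K)
    (hlog : Tendsto (fun n : ℕ => (∫ ω, log (entrySum ↑(wordProd G ω n)) ∂μ) / n) atTop (𝓝 0)) :
    Tendsto (fun n : ℕ => entropy (μ.prod confMeasure) (skewDensity G n) / n) atTop (𝓝 0) := by
  have hQ := quasiInvariant_letterSkewProduct hμ hG
  refine squeeze_zero (fun n => ?_) (fun n => ?_) (by simpa using hlog.const_mul 3)
  · exact div_nonneg (entropy_nonneg (hQ.pinched n) (hQ.integral_density n)) n.cast_nonneg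
  · rw [← mul_div_assoc]
    exact div_le_div_of_nonneg_right (entropy_skewDensity_le hμ hG n) n.cast_nonneg

end PlanarCocycle

section LocalProduct

/-- The two-sided sequence with given past and future. -/
def gluePastFuture (a b : ℕ → ℕ) : ℤ → ℕ := fun n => if 0 ≤ n then b n.toNat else a (-n).toNat

lemma pairProj_gluePastFuture {a b : ℕ → ℕ} (h : a 0 = b 0) :
    pairProj (gluePastFuture a b) = (a, b) := by
  refine Prod.ext (funext fun n => ?_) (funext fun n => ?_)
  · rcases n.eq_zero_or_pos with rfl | hn
    · simp [pairProj, projMinus, gluePastFuture, h]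
    · simp only [pairProj, projMinus, gluePastFuture]
      rw [if_neg (by omega), neg_neg, Int.toNat_natCast]
  · simp [pairProj, projPlus, gluePastFuture]

/-- The one-sided sequences with letters in `{1, …, ℓ}` and transitions in `W`. -/
def oneSidedSFT (ℓ : ℕ) (W : Set (ℕ × ℕ)) : Set (ℕ → ℕ) :=
  {a | ∀ n, (1 ≤ a n ∧ a n ≤ ℓ) ∧ (a n, a (n + 1)) ∈ W}

variable {ℓ : ℕ} {W : Set (ℕ × ℕ)}

lemma measurableSet_oneSidedSFT : MeasurableSet (oneSidedSFT ℓ W) := by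
  have letters (n : ℕ) : MeasurableSet {a : ℕ → ℕ | 1 ≤ a n ∧ a n ≤ ℓ} :=
    (measurable_pi_apply n : Measurable fun a : ℕ → ℕ => a n)
      (MeasurableSet.of_discrete (s := {m | 1 ≤ m ∧ m ≤ ℓ}))
  have transitions (n : ℕ) : MeasurableSet {a : ℕ → ℕ | (a n, a (n + 1)) ∈ W} :=
    (measurable_pi_apply n).prodMk (measurable_pi_apply (n + 1))
      (MeasurableSet.of_discrete (s := W))
  simp only [oneSidedSFT, Set.ofPred_forall]
  exact MeasurableSet.iInter fun n => (letters n).inter (transitions n)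

lemma projPlus_mem_oneSidedSFT {ω : ℤ → ℕ} (hω : ω ∈ SFT ℓ W) : projPlus ω ∈ oneSidedSFT ℓ W :=
  fun n => ⟨hω.1 _, by simpa only [projPlus, Nat.cast_succ] using hω.2 n⟩

lemma projMinus_mem_oneSidedSFT {ω : ℤ → ℕ} (hω : ω ∈ SFT ℓ W) :
    projMinus ω ∈ oneSidedSFT ℓ (Prod.swap ⁻¹' W) :=
  fun n => ⟨hω.1 _, by simpa [projMinus] using hω.2 (-(n + 1 : ℤ))⟩

lemma gluePastFuture_mem_SFT {a b : ℕ → ℕ} (h : a 0 = b 0)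
    (ha : a ∈ oneSidedSFT ℓ (Prod.swap ⁻¹' W)) (hb : b ∈ oneSidedSFT ℓ W) :
    gluePastFuture a b ∈ SFT ℓ W := by
  refine ⟨fun n => ?_, fun n => ?_⟩
  · unfold gluePastFuture
    split_ifs
    · exact (hb _).1
    · exact (ha _).1
  · unfold gluePastFuture
    rcases lt_trichotomy n (-1) with hn | rfl | hn
    · rw [if_neg (by omega), if_neg (by omega)]
      rw [show (-n).toNat = (-(n + 1)).toNat + 1 by omega]
      exact (ha (-(n + 1)).toNat).2
    · simpa [← h] using (ha 0).2
    · rw [if_pos (by omega), if_pos (by omega)]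
      rw [show (n + 1).toNat = n.toNat + 1 by omega]
      exact (hb n.toNat).2

lemma exists_ae_eq_const_of_ae_prod {α β γ : Type*} [MeasurableSpace α] [MeasurableSpace β]
    {P : Measure α} {Q : Measure β} [SFinite Q] [NeZero P] {w : α → γ} {u : β → γ}
    (h : ∀ᵐ x ∂P.prod Q, w x.1 = u x.2) : ∃ c, ∀ᵐ b ∂Q, u b = c := by
  obtain ⟨a, ha⟩ := (Measure.ae_ae_of_ae_prod h).exists
  exact ⟨w a, ha.mono fun b hb => hb.symm⟩

variable {μ : Measure (ℤ → ℕ)} {j : ℕ}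

lemma restrict_map_projMinus : (μ.map projMinus).restrict {a | a 0 = j} =
    (μ.restrict {ω | ω 0 = j}).map projMinus := by
  rw [Measure.restrict_map measurable_projMinus
    (measurableSet_eq_fun (measurable_pi_apply 0) measurable_const)]
  simp [projMinus]

lemma restrict_map_projPlus : (μ.map projPlus).restrict {a | a 0 = j} =
    (μ.restrict {ω | ω 0 = j}).map projPlus := by
  rw [Measure.restrict_map measurable_projPlus
    (measurableSet_eq_fun (measurable_pi_apply 0) measurable_const)]
  simp [projPlus]

lemma LocalProductStructure.prod_absolutelyContinuous [IsFiniteMeasure μ]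
    (hlps : LocalProductStructure ℓ W μ) (hSFT : ∀ᵐ ω ∂μ, ω ∈ SFT ℓ W) (hj1 : 1 ≤ j) (hjℓ : j ≤ ℓ) :
    ((μ.restrict {ω | ω 0 = j}).map projMinus).prod ((μ.restrict {ω | ω 0 = j}).map projPlus) ≪
      (μ.restrict {ω | ω 0 = j}).map pairProj := by
  obtain ⟨ψ, hψpos, hψ⟩ := hlps
  obtain ⟨hψint, hψmap⟩ := hψ j hj1 hjℓ
  rw [restrict_map_projMinus, restrict_map_projPlus] at hψint hψmap
  rw [hψmap]
  refine withDensity_absolutelyContinuous' hψint.1.aemeasurable.ennreal_ofReal ?_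
  have letter_measurable : MeasurableSet {a : ℕ → ℕ | a 0 = j} :=
    measurableSet_eq_fun (measurable_pi_apply 0) measurable_const
  have admissible : ∀ᵐ ω ∂μ.restrict {ω | ω 0 = j}, ω ∈ SFT ℓ W := ae_restrict_of_ae hSFT
  have letter : ∀ᵐ ω ∂μ.restrict {ω : ℤ → ℕ | ω 0 = j}, ω 0 = j :=
    ae_restrict_mem (measurableSet_eq_fun (measurable_pi_apply 0) measurable_const)
  have past : ∀ᵐ a ∂(μ.restrict {ω | ω 0 = j}).map projMinus,
      a ∈ {a | a 0 = j} ∩ oneSidedSFT ℓ (Prod.swap ⁻¹' W) :=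
    (ae_map_iff measurable_projMinus.aemeasurable
      (letter_measurable.inter measurableSet_oneSidedSFT)).2 <| by
      filter_upwards [admissible, letter] with ω hω h0 using ⟨h0, projMinus_mem_oneSidedSFT hω⟩
  have future : ∀ᵐ b ∂(μ.restrict {ω | ω 0 = j}).map projPlus,
      b ∈ {a | a 0 = j} ∩ oneSidedSFT ℓ W :=
    (ae_map_iff measurable_projPlus.aemeasurable
      (letter_measurable.inter measurableSet_oneSidedSFT)).2 <| by
      filter_upwards [admissible, letter] with ω hω h0 using ⟨h0, projPlus_mem_oneSidedSFT hω⟩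
  filter_upwards [Measure.quasiMeasurePreserving_fst.ae past,
    Measure.quasiMeasurePreserving_snd.ae future] with x ⟨ha0, ha⟩ ⟨hb0, hb⟩
  have glued := hψpos _ (gluePastFuture_mem_SFT (ha0.trans hb0.symm) ha hb)
  rw [pairProj_gluePastFuture (ha0.trans hb0.symm)] at glued
  exact (ENNReal.ofReal_pos.2 glued).ne'

lemma LocalProductStructure.exists_ae_eq_const [IsProbabilityMeasure μ]
    (hlps : LocalProductStructure ℓ W μ) (hSFT : ∀ᵐ ω ∂μ, ω ∈ SFT ℓ W) (hj1 : 1 ≤ j) (hjℓ : j ≤ ℓ)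
    (hj : μ {ω | ω 0 = j} ≠ 0) {η : (ℤ → ℕ) → ℝ} (past : η =ᵐ[μ] μ[η | pastAlgebra])
    (future : η =ᵐ[μ] μ[η | futureAlgebra]) :
    ∃ c, ∀ᵐ ω ∂μ.restrict {ω | ω 0 = j}, η ω = c := by
  obtain ⟨w, hw, hwη⟩ := (stronglyMeasurable_condExp (m := pastAlgebra)
    (μ := μ) (f := η)).measurable.exists_eq_measurable_comp
  obtain ⟨u, hu, huη⟩ := (stronglyMeasurable_condExp (m := futureAlgebra)
    (μ := μ) (f := η)).measurable.exists_eq_measurable_comp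
  rw [hwη] at past
  rw [huη] at future
  have : NeZero ((μ.restrict {ω | ω 0 = j}).map projMinus) :=
    ⟨(Measure.map_ne_zero_iff measurable_projMinus.aemeasurable).2
      (Measure.restrict_eq_zero.not.2 hj)⟩
  have agree : ∀ᵐ x ∂(μ.restrict {ω | ω 0 = j}).map pairProj, w x.1 = u x.2 :=
    (ae_map_iff (measurable_projMinus.prodMk measurable_projPlus).aemeasurable
      (measurableSet_eq_fun (hw.comp measurable_fst) (hu.comp measurable_snd))).2 <|
        ae_restrict_of_ae (past.symm.trans future)
  obtain ⟨c, hc⟩ := exists_ae_eq_const_of_ae_prod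
    ((hlps.prod_absolutelyContinuous hSFT hj1 hjℓ).ae_le agree)
  refine ⟨c, ?_⟩
  filter_upwards [ae_of_ae_map measurable_projPlus.aemeasurable hc,
    ae_restrict_of_ae future] with ω hω hη using hη.trans hω

end LocalProduct

section LetterMean

open scoped MatrixGroups

/-- The indicator function of the cylinder of sequences with a given letter at time `0`. -/
noncomputable def letterIndicator (j : ℕ) : (ℤ → ℕ) → ℝ := {ω | ω 0 = j}.indicator fun _ => 1

lemma measurableSet_letter (n : ℤ) (j : ℕ) : MeasurableSet {ω : ℤ → ℕ | ω n = j} :=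
  measurableSet_eq_fun (measurable_pi_apply n) measurable_const

lemma bddMeasurable_letterIndicator (j : ℕ) : BddMeasurable (letterIndicator j) :=
  bddMeasurable_indicator_one (measurableSet_letter 0 j)

lemma integral_letterIndicator (μ : Measure (ℤ → ℕ)) (j : ℕ) :
    ∫ ω, letterIndicator j ω ∂μ = μ.real {ω | ω 0 = j} :=
  integral_indicator_one (measurableSet_letter 0 j)

/-- The time averages of the correlations of an observable on sequences with an observable on the
plane, when the fibre coordinate starts with distribution `confMeasure`. -/
noncomputable abbrev planarCesaro (G : ℕ → SL(2, ℝ)) (μ : Measure (ℤ → ℕ)) :=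
  cesaroCorrelation (letterSkewProduct (Fin 2 → ℝ) G) μ confMeasure

/-- The limiting mean of a planar observable over the sequences with letter `j` at the origin. -/
noncomputable def letterMean (G : ℕ → SL(2, ℝ)) (μ : Measure (ℤ → ℕ)) (j : ℕ)
    (f : (Fin 2 → ℝ) → ℝ) : ℝ :=
  limUnder (hyperfilter ℕ : Filter ℕ) (planarCesaro G μ (letterIndicator j) f) /
    μ.real {ω | ω 0 = j}

/-- Given its letter `j`, the base point at time `n` is asymptotically independent of the fibre
coordinate at time `n`, on average in `n`. -/
def AsympIndep (G : ℕ → SL(2, ℝ)) (μ : Measure (ℤ → ℕ)) (j : ℕ) : Prop :=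
  ∀ f, BddMeasurable f → ∀ h, BddMeasurable h →
    Tendsto (planarCesaro G μ (fun ω => letterIndicator j ω * h ω) f) (hyperfilter ℕ)
      (𝓝 (letterMean G μ j f * ∫ ω, letterIndicator j ω * h ω ∂μ))

/-- A finitely additive probability on the punctured plane, acting on bounded functions. -/
structure IsMean (c : ((Fin 2 → ℝ) → ℝ) → ℝ) : Prop where
  add : ∀ f g, BddMeasurable f → BddMeasurable g → c (fun x => f x + g x) = c f + c g
  const_mul : ∀ a f, BddMeasurable f → c (fun x => a * f x) = a * c f
  one : c (fun _ => 1) = 1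
  nonneg : ∀ f, BddMeasurable f → (∀ x, x ≠ 0 → 0 ≤ f x) → 0 ≤ c f

variable {G : ℕ → SL(2, ℝ)} {μ : Measure (ℤ → ℕ)} {j : ℕ} {f : (Fin 2 → ℝ) → ℝ} {h : (ℤ → ℕ) → ℝ}

lemma AsympIndep.tendsto (hj : AsympIndep G μ j) (hf : BddMeasurable f) :
    Tendsto (planarCesaro G μ (letterIndicator j) f) (hyperfilter ℕ)
      (𝓝 (letterMean G μ j f * μ.real {ω | ω 0 = j})) := by
  simpa only [mul_one, integral_letterIndicator] using hj f hf _ (BddMeasurable.const 1)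

lemma planarCesaro_one [IsProbabilityMeasure μ] (hμ : MeasurePreserving shift μ μ)
    (hh : BddMeasurable h) {N : ℕ} (hN : N ≠ 0) :
    planarCesaro G μ h (fun _ => 1) N = ∫ ω, h ω ∂μ := by
  simp only [planarCesaro, cesaroCorrelation, isSkewProduct_letterSkewProduct
    |>.correlation_eq_integral_pastMean hμ hh (BddMeasurable.const 1), pastMean, integral_const,
    probReal_univ, smul_eq_mul, mul_one, Finset.sum_const, Finset.card_range, nsmul_eq_mul]
  exact mul_div_cancel_left₀ _ (Nat.cast_ne_zero.2 hN)

lemma planarCesaro_nonneg [SFinite μ] (h0 : ∀ ω, 0 ≤ h ω) (f0 : ∀ x, x ≠ 0 → 0 ≤ f x)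
    (N : ℕ) : 0 ≤ planarCesaro G μ h f N := by
  have ne_zero : ∀ᵐ x ∂confMeasure, x ≠ 0 :=
    (withDensity_absolutelyContinuous _ _).ae_le (Measure.ae_ne volume (0 : Fin 2 → ℝ))
  refine div_nonneg (Finset.sum_nonneg fun n _ => integral_nonneg_of_ae ?_) N.cast_nonneg
  filter_upwards [Measure.quasiMeasurePreserving_snd.ae ne_zero] with e he
  rw [Pi.zero_apply, letterSkewProduct_iterate]
  refine mul_nonneg (h0 _) (f0 _ fun hx => he ?_)
  rw [← inv_smul_smul (wordProd G e.1 n) e.2, show wordProd G e.1 n • e.2 = 0 from hx,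
    SL_smul_eq_mulVec, mulVec_zero]

lemma correlation_succ_transition (i : ℕ) (n : ℕ) :
    correlation (letterSkewProduct (Fin 2 → ℝ) G) μ confMeasure (n + 1)
        (fun ω => letterIndicator j ω * letterIndicator i (shiftEquiv.symm ω)) f =
      correlation (letterSkewProduct (Fin 2 → ℝ) G) μ confMeasure n
        (fun ω => letterIndicator i ω * letterIndicator j (shift ω)) (fun x => f (G i • x)) := by
  rw [correlation, correlation]
  congr 1 with e
  rw [Function.iterate_succ_apply', letterSkewProduct_apply]
  generalize (letterSkewProduct (Fin 2 → ℝ) G)^[n] e = x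
  rw [← coe_shiftEquiv, MeasurableEquiv.symm_apply_apply]
  by_cases h0 : x.1 0 = i
  · rw [h0, mul_comm (letterIndicator j _)]
  · have : x.1 ∉ {ω : ℤ → ℕ | ω 0 = i} := h0
    simp only [letterIndicator, indicator_of_notMem this, mul_zero, zero_mul]

lemma integral_transition_shift (hμ : MeasurePreserving shift μ μ) (i : ℕ) :
    ∫ ω, letterIndicator j ω * letterIndicator i (shiftEquiv.symm ω) ∂μ =
      ∫ ω, letterIndicator i ω * letterIndicator j (shift ω) ∂μ := by
  rw [← hμ.integral_comp shiftEquiv.measurableEmbedding]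
  simp only [← coe_shiftEquiv, MeasurableEquiv.symm_apply_apply, mul_comm]

variable [IsProbabilityMeasure μ]

lemma real_letter_pos (hj : μ {ω | ω 0 = j} ≠ 0) : 0 < μ.real {ω | ω 0 = j} :=
  ENNReal.toReal_pos hj (measure_ne_top _ _)

lemma isMean_letterMean (hμ : MeasurePreserving shift μ μ) (hj : μ {ω | ω 0 = j} ≠ 0)
    (hind : AsympIndep G μ j) : IsMean (letterMean G μ j) where
  add f g hf hg := by
    refine mul_right_cancel₀ (real_letter_pos hj).ne' ?_
    rw [add_mul]
    exact tendsto_nhds_unique (hind.tendsto (hf.add hg)) (((hind.tendsto hf).add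
      (hind.tendsto hg)).congr fun N =>
        (cesaroCorrelation_add (bddMeasurable_letterIndicator j) hf hg N).symm)
  const_mul a f hf := by
    refine mul_right_cancel₀ (real_letter_pos hj).ne' ?_
    rw [mul_assoc]
    exact tendsto_nhds_unique (hind.tendsto ((BddMeasurable.const a).mul hf))
      (((hind.tendsto hf).const_mul a).congr fun N => (cesaroCorrelation_const_mul a N).symm)
  one := by
    refine mul_right_cancel₀ (real_letter_pos hj).ne' ?_
    rw [one_mul]
    refine tendsto_nhds_unique (hind.tendsto (BddMeasurable.const 1))
      (tendsto_const_nhds.congr' ?_)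
    filter_upwards [Nat.hyperfilter_le_atTop (eventually_ne_atTop 0)] with N hN
    rw [planarCesaro_one hμ (bddMeasurable_letterIndicator j) hN, integral_letterIndicator]
  nonneg f hf f0 := nonneg_of_mul_nonneg_left (ge_of_tendsto (hind.tendsto hf)
    (Eventually.of_forall fun N => planarCesaro_nonneg
      (indicator_nonneg fun _ _ => zero_le_one) f0 N)) (real_letter_pos hj)

lemma asympIndep_of_tendsto {ℓ : ℕ} {W : Set (ℕ × ℕ)} (hSFT : ∀ᵐ ω ∂μ, ω ∈ SFT ℓ W)
    (hlps : LocalProductStructure ℓ W μ) (hμ : MeasurePreserving shift μ μ)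
    (hG : ∃ K, ∀ b, entrySum (G b) ≤ K)
    (hlog : Tendsto (fun n : ℕ => (∫ ω, log (entrySum ↑(wordProd G ω n)) ∂μ) / n) atTop (𝓝 0))
    (hj1 : 1 ≤ j) (hjℓ : j ≤ ℓ) (hj : μ {ω | ω 0 = j} ≠ 0) : AsympIndep G μ j := by
  intro f hf
  obtain ⟨η, -, hlim, past, future⟩ := isSkewProduct_letterSkewProduct.exists_fibre_density hμ
    (quasiInvariant_letterSkewProduct hμ hG) (tendsto_entropy_skewDensity hμ hG hlog) hf
  obtain ⟨c, hc⟩ := hlps.exists_ae_eq_const hSFT hj1 hjℓ hj past future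
  have limit (h : (ℤ → ℕ) → ℝ) (hh : BddMeasurable h) :
      Tendsto (planarCesaro G μ (fun ω => letterIndicator j ω * h ω) f) (hyperfilter ℕ)
        (𝓝 (c * ∫ ω, letterIndicator j ω * h ω ∂μ)) := by
    convert hlim _ ((bddMeasurable_letterIndicator j).mul hh) using 2
    rw [← integral_const_mul]
    refine integral_congr_ae ?_
    filter_upwards [(ae_restrict_iff' (measurableSet_letter 0 j)).1 hc] with ω hω
    by_cases h0 : ω ∈ {ω | ω 0 = j}
    · rw [hω h0, mul_comm]
    · simp only [letterIndicator, indicator_of_notMem h0, zero_mul, mul_zero]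
  have letterMean_eq : letterMean G μ j f = c := by
    have := limit _ (BddMeasurable.const 1)
    simp only [mul_one, integral_letterIndicator] at this
    rw [letterMean, this.limUnder_eq, mul_div_cancel_right₀ _ (real_letter_pos hj).ne']
  rwa [letterMean_eq]

lemma integral_transition_ne_zero {i : ℕ} (hij : μ {ω | ω 0 = i ∧ ω 1 = j} ≠ 0) :
    ∫ ω, letterIndicator i ω * letterIndicator j (shift ω) ∂μ ≠ 0 := by
  have transition (ω : ℤ → ℕ) : letterIndicator i ω * letterIndicator j (shift ω) =
      {ω : ℤ → ℕ | ω 0 = i ∧ ω 1 = j}.indicator 1 ω := by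
    rw [mul_comm]
    simp [letterIndicator, indicator, shift, ite_and]
  simp only [transition]
  refine (integral_indicator_one
    ((measurableSet_letter 0 i).inter (measurableSet_letter 1 j))).trans_ne ?_
  exact (ENNReal.toReal_pos hij (measure_ne_top _ _)).ne'

lemma letterMean_step (hμ : MeasurePreserving shift μ μ) {i : ℕ} (hi : AsympIndep G μ i)
    (hj : AsympIndep G μ j) (hij : μ {ω | ω 0 = i ∧ ω 1 = j} ≠ 0) (hf : BddMeasurable f) :
    letterMean G μ j f = letterMean G μ i fun x => f (G i • x) := by
  have before := (bddMeasurable_letterIndicator i).comp shiftEquiv.symm.measurable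
  have after := (bddMeasurable_letterIndicator j).comp hμ.measurable
  obtain ⟨C, hC⟩ := exists_abs_correlation_le (F := letterSkewProduct (Fin 2 → ℝ) G) (μ := μ)
    (m := confMeasure) ((bddMeasurable_letterIndicator j).mul before) hf
  have delay := (tendsto_cesaro_sub_shift (tendsto_div_of_forall_abs_le hC) 1).mono_left
    Nat.hyperfilter_le_atTop
  have limit : Tendsto (planarCesaro G μ
      (fun ω => letterIndicator i ω * letterIndicator j (shift ω)) fun x => f (G i • x))
      (hyperfilter ℕ)
      (𝓝 (letterMean G μ j f * ∫ ω, letterIndicator i ω * letterIndicator j (shift ω) ∂μ)) := by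
    rw [← integral_transition_shift hμ, ← zero_add (letterMean G μ j f * _)]
    refine (delay.add (hj f hf _ before)).congr fun N => ?_
    simp only [planarCesaro, cesaroCorrelation, correlation_succ_transition, ← add_div,
      ← Finset.sum_add_distrib, sub_add_cancel]
  exact mul_right_cancel₀ (integral_transition_ne_zero hij) (tendsto_nhds_unique limit
    (hi _ (hf.comp (measurable_const_smul (G i))) _ after))

end LetterMean

section InvariantMean

open scoped MatrixGroups

variable {E : Type*} [MeasurableSpace E] {c : ((Fin 2 → ℝ) → ℝ) → ℝ} {f g : (Fin 2 → ℝ) → ℝ}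
  {M : Matrix (Fin 2) (Fin 2) ℝ} {x : Fin 2 → ℝ}

lemma BddMeasurable.lin {f g : E → ℝ} (hf : BddMeasurable f) (hg : BddMeasurable g) (a b : ℝ) :
    BddMeasurable fun x => a * f x + b * g x :=
  ((BddMeasurable.const a).mul hf).add ((BddMeasurable.const b).mul hg)

namespace IsMean

lemma const (hc : IsMean c) (a : ℝ) : c (fun _ => a) = a := by
  simpa only [mul_one, hc.one] using hc.const_mul a _ (BddMeasurable.const 1)

lemma lin (hc : IsMean c) (hf : BddMeasurable f) (hg : BddMeasurable g) (a b : ℝ) :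
    c (fun x => a * f x + b * g x) = a * c f + b * c g := by
  rw [hc.add _ _ ((BddMeasurable.const a).mul hf) ((BddMeasurable.const b).mul hg),
    hc.const_mul a f hf, hc.const_mul b g hg]

lemma sub (hc : IsMean c) (hf : BddMeasurable f) (hg : BddMeasurable g) :
    c (fun x => f x - g x) = c f - c g := by
  simpa only [one_mul, neg_mul, ← sub_eq_add_neg] using hc.lin hf hg 1 (-1)

lemma mono (hc : IsMean c) (hf : BddMeasurable f) (hg : BddMeasurable g)
    (h : ∀ x, x ≠ 0 → f x ≤ g x) : c f ≤ c g :=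
  sub_nonneg.1 (hc.sub hg hf ▸ hc.nonneg _ (hg.sub hf) fun x hx => sub_nonneg.2 (h x hx))

lemma congr (hc : IsMean c) (hf : BddMeasurable f) (hg : BddMeasurable g)
    (h : ∀ x, x ≠ 0 → f x = g x) : c f = c g :=
  (hc.mono hf hg fun x hx => (h x hx).le).antisymm (hc.mono hg hf fun x hx => (h x hx).ge)

lemma eq_zero_of_rotate (hc : IsMean c) {R : (Fin 2 → ℝ) → Fin 2 → ℝ}
    (hR : ∀ f, BddMeasurable f → c (fun x => f (R x)) = c f)
    (hf : BddMeasurable f) (hg : BddMeasurable g) {a b : ℝ} (hab : (1 - a) ^ 2 + b ^ 2 ≠ 0)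
    (hfR : ∀ x, f (R x) = a * f x + b * g x) (hgR : ∀ x, g (R x) = -b * f x + a * g x) :
    c f = 0 ∧ c g = 0 := by
  have inv_f := hR f hf
  have inv_g := hR g hg
  simp only [hfR, hgR, hc.lin hf hg] at inv_f inv_g
  have mul_f : ((1 - a) ^ 2 + b ^ 2) * c f = 0 := by
    linear_combination (-(1 - a)) * inv_f - b * inv_g
  have mul_g : ((1 - a) ^ 2 + b ^ 2) * c g = 0 := by
    linear_combination b * inv_f - (1 - a) * inv_g
  exact ⟨(mul_eq_zero.1 mul_f).resolve_left hab, (mul_eq_zero.1 mul_g).resolve_left hab⟩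

end IsMean

/-- The square of the Euclidean norm; the ambient norm on `Fin 2 → ℝ` is the supremum norm. -/
def sqNorm (x : Fin 2 → ℝ) : ℝ := x 0 ^ 2 + x 1 ^ 2

/-- The cosine of twice the angle of a plane vector, with value `0` at the origin. -/
noncomputable def cosTwo (x : Fin 2 → ℝ) : ℝ := (x 0 ^ 2 - x 1 ^ 2) / sqNorm x

/-- The sine of twice the angle of a plane vector, with value `0` at the origin. -/
noncomputable def sinTwo (x : Fin 2 → ℝ) : ℝ := 2 * x 0 * x 1 / sqNorm x

/-- The cosine of four times the angle of a plane vector, with value `0` at the origin. -/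
noncomputable def cosFour (x : Fin 2 → ℝ) : ℝ := cosTwo x * cosTwo x - sinTwo x * sinTwo x

/-- The sine of four times the angle of a plane vector, with value `0` at the origin. -/
noncomputable def sinFour (x : Fin 2 → ℝ) : ℝ := 2 * (cosTwo x * sinTwo x)

lemma sqNorm_pos (hx : x ≠ 0) : 0 < sqNorm x := by
  obtain ⟨i, hi⟩ := Function.ne_iff.1 hx
  have : 0 < x i ^ 2 := sq_pos_of_ne_zero hi
  fin_cases i
  exacts [add_pos_of_pos_of_nonneg this (sq_nonneg _), add_pos_of_nonneg_of_pos (sq_nonneg _) this]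

lemma cosTwo_sq_add_sinTwo_sq (hx : x ≠ 0) : cosTwo x ^ 2 + sinTwo x ^ 2 = 1 := by
  have := (sqNorm_pos hx).ne'
  unfold cosTwo sinTwo
  field_simp
  unfold sqNorm
  ring

lemma cosTwo_sq_add_sinTwo_sq_le (x : Fin 2 → ℝ) : cosTwo x ^ 2 + sinTwo x ^ 2 ≤ 1 := by
  by_cases hx : x = 0
  · simp [hx, cosTwo, sinTwo]
  · exact (cosTwo_sq_add_sinTwo_sq hx).le

lemma bddMeasurable_cosTwo : BddMeasurable cosTwo :=
  ⟨by unfold cosTwo sqNorm; fun_prop, 1, fun x => abs_le_one_iff_mul_self_le_one.2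
    (by nlinarith [cosTwo_sq_add_sinTwo_sq_le x, sq_nonneg (sinTwo x)])⟩

lemma bddMeasurable_sinTwo : BddMeasurable sinTwo :=
  ⟨by unfold sinTwo sqNorm; fun_prop, 1, fun x => abs_le_one_iff_mul_self_le_one.2
    (by nlinarith [cosTwo_sq_add_sinTwo_sq_le x, sq_nonneg (cosTwo x)])⟩

lemma bddMeasurable_cosFour : BddMeasurable cosFour :=
  (bddMeasurable_cosTwo.mul bddMeasurable_cosTwo).sub
    (bddMeasurable_sinTwo.mul bddMeasurable_sinTwo)

lemma bddMeasurable_sinFour : BddMeasurable sinFour :=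
  (BddMeasurable.const 2).mul (bddMeasurable_cosTwo.mul bddMeasurable_sinTwo)

lemma mulVec_fin_two_zero (M : Matrix (Fin 2) (Fin 2) ℝ) (x : Fin 2 → ℝ) :
    (M *ᵥ x) 0 = M 0 0 * x 0 + M 0 1 * x 1 := by
  simp only [Matrix.mulVec, dotProduct, Fin.sum_univ_two]

lemma mulVec_fin_two_one (M : Matrix (Fin 2) (Fin 2) ℝ) (x : Fin 2 → ℝ) :
    (M *ᵥ x) 1 = M 1 0 * x 0 + M 1 1 * x 1 := by
  simp only [Matrix.mulVec, dotProduct, Fin.sum_univ_two]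

/-- A plane matrix which is a multiple of a rotation; for determinant one, a rotation. -/
def IsRotation (M : Matrix (Fin 2) (Fin 2) ℝ) : Prop := M 1 1 = M 0 0 ∧ M 1 0 = -M 0 1

lemma IsRotation.sqNorm_mulVec (hM : IsRotation M) (x : Fin 2 → ℝ) :
    sqNorm (M *ᵥ x) = M.det * sqNorm x := by
  rw [det_fin_two, sqNorm, sqNorm, mulVec_fin_two_zero, mulVec_fin_two_one, hM.1, hM.2]
  ring

lemma IsRotation.cosTwo_mulVec (hM : IsRotation M) (hdet : M.det = 1) (x : Fin 2 → ℝ) :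
    cosTwo (M *ᵥ x) =
      (M 0 0 ^ 2 - M 0 1 ^ 2) * cosTwo x + 2 * M 0 0 * M 0 1 * sinTwo x := by
  rw [cosTwo, cosTwo, sinTwo, hM.sqNorm_mulVec, hdet, mulVec_fin_two_zero, mulVec_fin_two_one,
    hM.1, hM.2]
  ring

lemma IsRotation.sinTwo_mulVec (hM : IsRotation M) (hdet : M.det = 1) (x : Fin 2 → ℝ) :
    sinTwo (M *ᵥ x) =
      -(2 * M 0 0 * M 0 1) * cosTwo x + (M 0 0 ^ 2 - M 0 1 ^ 2) * sinTwo x := by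
  rw [sinTwo, cosTwo, sinTwo, hM.sqNorm_mulVec, hdet, mulVec_fin_two_zero, mulVec_fin_two_one,
    hM.1, hM.2]
  ring

/-- The average over all directions of the dilation of squared Euclidean norms. -/
noncomputable def meanDilation (M : Matrix (Fin 2) (Fin 2) ℝ) : ℝ :=
  (M 0 0 ^ 2 + M 0 1 ^ 2 + M 1 0 ^ 2 + M 1 1 ^ 2) / 2

/-- The oscillation of the dilation of squared Euclidean norms around its average, as a
trigonometric polynomial in the direction. -/
noncomputable def dilationOsc (M : Matrix (Fin 2) (Fin 2) ℝ) (x : Fin 2 → ℝ) : ℝ :=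
  (M 0 0 ^ 2 + M 1 0 ^ 2 - M 0 1 ^ 2 - M 1 1 ^ 2) / 2 * cosTwo x +
    (M 0 0 * M 0 1 + M 1 0 * M 1 1) * sinTwo x

/-- The dilation `‖M x‖² / ‖x‖²` of squared Euclidean norms in a direction `x ≠ 0`. -/
noncomputable def dilation (M : Matrix (Fin 2) (Fin 2) ℝ) (x : Fin 2 → ℝ) : ℝ :=
  meanDilation M + dilationOsc M x

lemma bddMeasurable_dilationOsc (M : Matrix (Fin 2) (Fin 2) ℝ) : BddMeasurable (dilationOsc M) :=
  bddMeasurable_cosTwo.lin bddMeasurable_sinTwo _ _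

lemma bddMeasurable_dilation (M : Matrix (Fin 2) (Fin 2) ℝ) : BddMeasurable (dilation M) :=
  (BddMeasurable.const _).add (bddMeasurable_dilationOsc M)

lemma dilation_eq_div (M : Matrix (Fin 2) (Fin 2) ℝ) (hx : x ≠ 0) :
    dilation M x = sqNorm (M *ᵥ x) / sqNorm x := by
  have := (sqNorm_pos hx).ne'
  rw [dilation, meanDilation, dilationOsc, cosTwo, sinTwo]
  field_simp
  rw [sqNorm, sqNorm, mulVec_fin_two_zero, mulVec_fin_two_one]
  ring

lemma dilation_inv_smul (M : SL(2, ℝ)) (hx : x ≠ 0) :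
    dilation M x * dilation (M⁻¹ : SL(2, ℝ)) (M • x) = 1 := by
  have hMx : M • x ≠ 0 := fun h => hx <| by
    rw [← inv_smul_smul M x, h, SL_smul_eq_mulVec, mulVec_zero]
  rw [dilation_eq_div _ hx, dilation_eq_div _ hMx, ← SL_smul_eq_mulVec, ← SL_smul_eq_mulVec,
    inv_smul_smul]
  exact div_mul_div_cancel₀' (sqNorm_pos hMx).ne' _ _ |>.trans (div_self (sqNorm_pos hx).ne')

/-- The second and fourth Fourier coefficients of a mean on the plane vanish. -/
structure LowFrequencyFree (c : ((Fin 2 → ℝ) → ℝ) → ℝ) : Prop where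
  cosTwo_eq_zero : c cosTwo = 0
  sinTwo_eq_zero : c sinTwo = 0
  cosFour_eq_zero : c cosFour = 0
  sinFour_eq_zero : c sinFour = 0

lemma IsMean.lowFrequencyFree (hc : IsMean c) {R : SL(2, ℝ)} (hrot : IsRotation R)
    (h0 : R 0 0 ≠ 0) (h1 : R 0 1 ≠ 0)
    (hR : ∀ f, BddMeasurable f → c (fun x => f (R • x)) = c f) : LowFrequencyFree c := by
  have unit : R 0 0 ^ 2 + R 0 1 ^ 2 = 1 := by
    have := R.2
    rw [det_fin_two, hrot.1, hrot.2] at this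
    linear_combination this
  have cosTwo_rot (x : Fin 2 → ℝ) : cosTwo (R • x) =
      (R 0 0 ^ 2 - R 0 1 ^ 2) * cosTwo x + 2 * R 0 0 * R 0 1 * sinTwo x :=
    hrot.cosTwo_mulVec R.2 x
  have sinTwo_rot (x : Fin 2 → ℝ) : sinTwo (R • x) =
      -(2 * R 0 0 * R 0 1) * cosTwo x + (R 0 0 ^ 2 - R 0 1 ^ 2) * sinTwo x :=
    hrot.sinTwo_mulVec R.2 x
  generalize R 0 0 = a, R 0 1 = b at *
  have angle_two : (1 - (a ^ 2 - b ^ 2)) ^ 2 + (2 * a * b) ^ 2 ≠ 0 := by positivity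
  have angle_four : (1 - ((a ^ 2 - b ^ 2) ^ 2 - (2 * a * b) ^ 2)) ^ 2 +
      (2 * (a ^ 2 - b ^ 2) * (2 * a * b)) ^ 2 ≠ 0 := by
    have : 1 - ((a ^ 2 - b ^ 2) ^ 2 - (2 * a * b) ^ 2) = 2 * (2 * a * b) ^ 2 := by
      linear_combination (-(a ^ 2 + b ^ 2 + 1)) * unit
    rw [this]
    positivity
  obtain ⟨cos_two, sin_two⟩ := hc.eq_zero_of_rotate hR bddMeasurable_cosTwo bddMeasurable_sinTwo
    angle_two cosTwo_rot sinTwo_rot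
  obtain ⟨cos_four, sin_four⟩ := hc.eq_zero_of_rotate hR bddMeasurable_cosFour
    bddMeasurable_sinFour angle_four
    (fun x => by simp only [cosFour, sinFour, cosTwo_rot, sinTwo_rot]; ring)
    (fun x => by simp only [cosFour, sinFour, cosTwo_rot, sinTwo_rot]; ring)
  exact ⟨cos_two, sin_two, cos_four, sin_four⟩

lemma LowFrequencyFree.mean_lin (hlow : LowFrequencyFree c) (hc : IsMean c) (a b : ℝ) :
    c (fun x => a * cosTwo x + b * sinTwo x) = 0 := by
  rw [hc.lin bddMeasurable_cosTwo bddMeasurable_sinTwo, hlow.cosTwo_eq_zero, hlow.sinTwo_eq_zero,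
    mul_zero, mul_zero, add_zero]

lemma LowFrequencyFree.mean_lin_sq (hlow : LowFrequencyFree c) (hc : IsMean c) (a b : ℝ) :
    c (fun x => (a * cosTwo x + b * sinTwo x) ^ 2) = (a ^ 2 + b ^ 2) / 2 := by
  have four := bddMeasurable_cosFour.lin bddMeasurable_sinFour ((a ^ 2 - b ^ 2) / 2) (a * b)
  have double_angle (x : Fin 2 → ℝ) (hx : x ≠ 0) : (a * cosTwo x + b * sinTwo x) ^ 2 =
      (a ^ 2 + b ^ 2) / 2 + ((a ^ 2 - b ^ 2) / 2 * cosFour x + a * b * sinFour x) := by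
    rw [cosFour, sinFour]
    linear_combination (a ^ 2 + b ^ 2) / 2 * cosTwo_sq_add_sinTwo_sq hx
  rw [hc.congr (bddMeasurable_cosTwo.lin bddMeasurable_sinTwo a b).sq
    ((BddMeasurable.const _).add four) double_angle, hc.add _ _ (BddMeasurable.const _) four,
    hc.const, hc.lin bddMeasurable_cosFour bddMeasurable_sinFour, hlow.cosFour_eq_zero,
    hlow.sinFour_eq_zero, mul_zero, mul_zero, add_zero, add_zero]

lemma LowFrequencyFree.mean_dilation (hlow : LowFrequencyFree c) (hc : IsMean c)
    (M : Matrix (Fin 2) (Fin 2) ℝ) : c (dilation M) = meanDilation M :=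
  (hc.add _ _ (BddMeasurable.const _) (bddMeasurable_dilationOsc M)).trans <| by
    rw [hc.const, show c (fun x => dilationOsc M x) = 0 from hlow.mean_lin hc _ _, add_zero]

lemma meanDilation_inv (M : SL(2, ℝ)) : meanDilation (M⁻¹ : SL(2, ℝ)) = meanDilation M := by
  simp only [meanDilation, Matrix.SpecialLinearGroup.coe_inv, adjugate_fin_two, of_apply,
    cons_val_zero, cons_val_one]
  ring

lemma one_le_meanDilation (hM : M.det = 1) : 1 ≤ meanDilation M := by
  rw [← hM, det_fin_two, meanDilation]
  nlinarith [sq_nonneg (M 0 0 - M 1 1), sq_nonneg (M 0 1 + M 1 0)]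

lemma isRotation_of_meanDilation_le_one (hM : M.det = 1) (hle : meanDilation M ≤ 1) :
    IsRotation M := by
  have sum_sq : (M 1 1 - M 0 0) ^ 2 + (M 1 0 + M 0 1) ^ 2 ≤ 0 := by
    rw [← hM, det_fin_two, meanDilation] at hle
    linarith
  have diff_sq := sq_nonneg (M 1 1 - M 0 0)
  have add_sq := sq_nonneg (M 1 0 + M 0 1)
  exact ⟨sub_eq_zero.1 (pow_eq_zero_iff two_ne_zero |>.1 (by linarith)),
    eq_neg_of_add_eq_zero_left (pow_eq_zero_iff two_ne_zero |>.1 (by linarith))⟩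

lemma dilationOsc_coeff_sq (hM : M.det = 1) :
    ((M 0 0 ^ 2 + M 1 0 ^ 2 - M 0 1 ^ 2 - M 1 1 ^ 2) / 2) ^ 2 +
      (M 0 0 * M 0 1 + M 1 0 * M 1 1) ^ 2 = meanDilation M ^ 2 - 1 := by
  rw [det_fin_two] at hM
  rw [meanDilation]
  linear_combination (-(M 0 0 * M 1 1 - M 0 1 * M 1 0 + 1)) * hM

lemma dilationOsc_sq_le (hM : M.det = 1) (x : Fin 2 → ℝ) :
    dilationOsc M x ^ 2 ≤ meanDilation M ^ 2 - 1 := by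
  rw [← dilationOsc_coeff_sq hM, dilationOsc]
  generalize (M 0 0 ^ 2 + M 1 0 ^ 2 - M 0 1 ^ 2 - M 1 1 ^ 2) / 2 = a,
    M 0 0 * M 0 1 + M 1 0 * M 1 1 = b
  nlinarith [sq_nonneg (a * sinTwo x - b * cosTwo x), cosTwo_sq_add_sinTwo_sq_le x,
    mul_nonneg (add_nonneg (sq_nonneg a) (sq_nonneg b))
      (sub_nonneg.2 (cosTwo_sq_add_sinTwo_sq_le x))]

lemma meanDilation_sq_sub_dilationOsc_sq_le (M : SL(2, ℝ)) (hx : x ≠ 0) :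
    meanDilation M ^ 2 - 1 - dilationOsc M x ^ 2 ≤ 2 * meanDilation M *
      (meanDilation M - dilationOsc M x - dilation (M⁻¹ : SL(2, ℝ)) (M • x)) := by
  have osc_sq := dilationOsc_sq_le M.2 x
  have one_le := one_le_meanDilation M.2
  have inverse := dilation_inv_smul M hx
  rw [dilation] at inverse
  obtain ⟨lower, upper⟩ := abs_lt.1 (abs_lt_of_sq_lt_sq
    (osc_sq.trans_lt (sub_one_lt _)) (zero_le_one.trans one_le))
  generalize meanDilation M = A, dilationOsc M x = u, dilation (M⁻¹ : SL(2, ℝ)) (M • x) = g at *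
  have factor : A ^ 2 - 1 - u ^ 2 = (A + u) * (A - u - g) := by linear_combination inverse
  have gap_nonneg : 0 ≤ A - u - g :=
    nonneg_of_mul_nonneg_right (factor ▸ sub_nonneg.2 osc_sq) (by linarith)
  rw [factor]
  exact mul_le_mul_of_nonneg_right (by linarith) gap_nonneg

/-- The dilations by `M` at `x` and by `M⁻¹` at `M x` have the same mean `A` under an invariant
mean, but their product is `1`, which by strict convexity of the inverse forces `A ≤ 1`. -/
lemma IsMean.isRotation_of_invariant (hc : IsMean c) (hlow : LowFrequencyFree c) (M : SL(2, ℝ))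
    (hM : ∀ f, BddMeasurable f → c (fun x => f (M • x)) = c f) : IsRotation M := by
  have osc := bddMeasurable_dilationOsc M
  have inverse : BddMeasurable fun x => dilation (M⁻¹ : SL(2, ℝ)) (M • x) :=
    (bddMeasurable_dilation _).comp (measurable_const_smul M)
  have mean_osc : c (dilationOsc M) = 0 := hlow.mean_lin hc _ _
  have mean_osc_sq : c (fun x => dilationOsc M x ^ 2) = (meanDilation M ^ 2 - 1) / 2 := by
    rw [← dilationOsc_coeff_sq M.2]
    exact hlow.mean_lin_sq hc _ _
  have mean_inverse : c (fun x => dilation (M⁻¹ : SL(2, ℝ)) (M • x)) = meanDilation M := by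
    rw [hM _ (bddMeasurable_dilation _), hlow.mean_dilation hc, meanDilation_inv]
  have gap : BddMeasurable fun x => meanDilation M - dilationOsc M x -
      dilation (M⁻¹ : SL(2, ℝ)) (M • x) := ((BddMeasurable.const _).sub osc).sub inverse
  have mean_le := hc.mono ((BddMeasurable.const _).sub osc.sq) ((BddMeasurable.const _).mul gap)
    fun x hx => meanDilation_sq_sub_dilationOsc_sq_le M hx
  rw [hc.sub (BddMeasurable.const _) osc.sq, hc.const, mean_osc_sq, hc.const_mul _ _ gap,
    hc.sub ((BddMeasurable.const _).sub osc) inverse, hc.sub (BddMeasurable.const _) osc, hc.const,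
    mean_osc, mean_inverse] at mean_le
  exact isRotation_of_meanDilation_le_one M.2
    (by nlinarith [one_le_meanDilation M.2])

end InvariantMean

section Conjugation

open scoped MatrixGroups

lemma abs_apply_le_norm (M : Matrix (Fin 2) (Fin 2) ℝ) (i j : Fin 2) : |M i j| ≤ ‖M‖ := by
  have column := Matrix.l2_opNorm_mulVec M (EuclideanSpace.single j 1)
  have entry :=
    PiLp.norm_apply_le (WithLp.toLp 2 (M *ᵥ (EuclideanSpace.single j (1 : ℝ)).ofLp)) i
  simp only [PiLp.norm_single, norm_one, mul_one] at column
  refine le_trans ?_ (entry.trans column)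
  simp

lemma entrySum_le_norm (M : Matrix (Fin 2) (Fin 2) ℝ) : entrySum M ≤ 4 * ‖M‖ := by
  rw [entrySum_eq]
  linarith [abs_apply_le_norm M 0 0, abs_apply_le_norm M 0 1, abs_apply_le_norm M 1 0,
    abs_apply_le_norm M 1 1]

/-- The rotation by `-k` conjugated by a diagonal matrix with ratio `t` of its entries. -/
noncomputable def ellipticMatrix (t : ℝˣ) (k : ℝ) : SL(2, ℝ) :=
  ⟨!![cos k, t * sin k; -((t : ℝ)⁻¹ * sin k), cos k], by
    rw [det_fin_two_of]
    field_simp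
    linear_combination sin_sq_add_cos_sq k⟩

lemma coe_ellipticMatrix (t : ℝˣ) (k : ℝ) : (ellipticMatrix t k : Matrix (Fin 2) (Fin 2) ℝ) =
    !![cos k, t * sin k; -((t : ℝ)⁻¹ * sin k), cos k] := rfl

/-- The quotient `p / b` of two letters; on other numbers `b`, which do not occur in the subshift,
it is `1`, so that only finitely many values occur. -/
noncomputable def letterRatio (ℓ p b : ℕ) : ℝˣ :=
  if h : 0 < (p / b : ℝ) ∧ b ≤ ℓ then Units.mk0 _ h.1.ne' else 1

lemma letterRatio_pos (ℓ p b : ℕ) : 0 < (letterRatio ℓ p b : ℝ) := by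
  unfold letterRatio
  split_ifs with h
  exacts [h.1, one_pos]

lemma coe_letterRatio {ℓ p b : ℕ} (hp : 1 ≤ p) (hb : 1 ≤ b ∧ b ≤ ℓ) :
    (letterRatio ℓ p b : ℝ) = p / b := by
  have pos : 0 < (p / b : ℝ) := div_pos (Nat.cast_pos.2 hp) (Nat.cast_pos.2 hb.1)
  rw [letterRatio, dif_pos ⟨pos, hb.2⟩, Units.val_mk0]

/-- The matrix by which a letter acts once the cocycle is conjugated so that the letter `p` acts by
a rotation. -/
noncomputable def letterMatrix (ℓ p : ℕ) (k : ℝ) (b : ℕ) : SL(2, ℝ) :=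
  ellipticMatrix (letterRatio ℓ p b) k

lemma exists_entrySum_letterMatrix_le (ℓ p : ℕ) (k : ℝ) :
    ∃ K, ∀ b, entrySum (letterMatrix ℓ p k b) ≤ K := by
  obtain ⟨K, hK⟩ :=
    ((finite_Iic ℓ).image fun b => entrySum ↑(letterMatrix ℓ p k b)).bddAbove
  refine ⟨max K (entrySum (ellipticMatrix 1 k)), fun b => ?_⟩
  by_cases hb : b ≤ ℓ
  · exact (hK (mem_image_of_mem _ hb)).trans (le_max_left _ _)
  · rw [letterMatrix, letterRatio, dif_neg fun h => hb h.2]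
    exact le_max_right _ _

/-- The change of coordinates at a letter `a` conjugating the cocycle to `letterMatrix`. -/
noncomputable def conjMatrix (p : ℕ) (k : ℝ) (a : ℕ) : Matrix (Fin 2) (Fin 2) ℝ :=
  (√(a : ℝ))⁻¹ • !![1, 0; a / p * (cos k / sin k), -(a / p / sin k)]

lemma isUnit_det_conjMatrix {p a : ℕ} (hp : 1 ≤ p) (ha : 1 ≤ a) {k : ℝ} (hk : sin k ≠ 0) :
    IsUnit (conjMatrix p k a).det := by
  have p_pos : (0 : ℝ) < p := Nat.cast_pos.2 hp
  have a_pos : (0 : ℝ) < a := Nat.cast_pos.2 ha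
  rw [isUnit_iff_ne_zero, conjMatrix, det_smul, det_fin_two_of]
  simp [hk, p_pos.ne', a_pos.ne']

variable {ℓ p : ℕ} {W : Set (ℕ × ℕ)} {k : ℝ} {ω : ℤ → ℕ}

lemma shift_iterate_mem_SFT (hω : ω ∈ SFT ℓ W) (n : ℕ) : shift^[n] ω ∈ SFT ℓ W := by
  refine ⟨fun i => ?_, fun i => ?_⟩
  · rw [shift_iterate_apply]
    exact hω.1 _
  · rw [shift_iterate_apply, shift_iterate_apply, add_right_comm]
    exact hω.2 _

lemma conjMatrix_mul_Acoc (hp : 1 ≤ p) (hk : sin k ≠ 0) (hω : ω ∈ SFT ℓ W) :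
    conjMatrix p k (ω 0) * Acoc k ω =
      letterMatrix ℓ p k (ω 0) * conjMatrix p k (ω (-1)) := by
  have p_ne_zero : (p : ℝ) ≠ 0 := Nat.cast_ne_zero.2 (Nat.one_le_iff_ne_zero.1 hp)
  have letter_pos (i : ℤ) : (0 : ℝ) < ω i := Nat.cast_pos.2 (hω.1 i).1
  have pos := letter_pos 0
  have sqrt_ne_zero := (sqrt_pos.2 pos).ne'
  rw [letterMatrix, coe_ellipticMatrix, coe_letterRatio hp (hω.1 0), conjMatrix, conjMatrix, Acoc,
    Matrix.smul_mul, Matrix.mul_smul, Matrix.mul_smul, smul_smul, sqrt_div pos.le,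
    inv_mul_eq_div, div_div_cancel_left' sqrt_ne_zero]
  congr 1
  ext i j
  fin_cases i <;> fin_cases j <;>
    simp [Matrix.mul_apply, Fin.sum_univ_two] <;> field_simp [p_ne_zero]
  linear_combination (ω 0 : ℝ) * sin_sq_add_cos_sq k

lemma wordProd_mul_conjMatrix (hp : 1 ≤ p) (hk : sin k ≠ 0) (hω : ω ∈ SFT ℓ W) (n : ℕ) :
    wordProd (letterMatrix ℓ p k) ω n * conjMatrix p k (ω (-1)) =
      conjMatrix p k (ω (n - 1)) * AIter k ω n := by
  induction n with
  | zero => simp [wordProd, AIter]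
  | succ n ih =>
    have conj := conjMatrix_mul_Acoc hp hk (shift_iterate_mem_SFT hω n)
    simp only [shift_iterate_apply, zero_add, neg_add_eq_sub] at conj
    rw [wordProd, Matrix.SpecialLinearGroup.coe_mul, AIter, Matrix.mul_assoc, ih,
      ← Matrix.mul_assoc, ← conj, Matrix.mul_assoc, Nat.cast_succ, add_sub_cancel_right]

lemma exists_entrySum_wordProd_le_norm (W : Set (ℕ × ℕ)) (hp : 1 ≤ p) (hk : sin k ≠ 0) :
    ∃ K > 0, ∀ ω ∈ SFT ℓ W, ∀ n,
      entrySum ↑(wordProd (letterMatrix ℓ p k) ω n) ≤ K * ‖AIter k ω n‖ := by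
  obtain ⟨K, hK⟩ := ((finite_Iic ℓ).image fun a => entrySum (conjMatrix p k a)).bddAbove
  obtain ⟨D, hD⟩ := ((finite_Iic ℓ).image fun a => entrySum (conjMatrix p k a)⁻¹).bddAbove
  have K_nonneg : 0 ≤ K := (entrySum_nonneg _).trans (hK (mem_image_of_mem _ (Nat.zero_le ℓ)))
  have D_nonneg : 0 ≤ D := (entrySum_nonneg _).trans (hD (mem_image_of_mem _ (Nat.zero_le ℓ)))
  refine ⟨K * 4 * D + 1, by positivity, fun ω hω n => ?_⟩
  calc entrySum ↑(wordProd (letterMatrix ℓ p k) ω n)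
      = entrySum (conjMatrix p k (ω (n - 1)) * AIter k ω n * (conjMatrix p k (ω (-1)))⁻¹) := by
        rw [← wordProd_mul_conjMatrix hp hk hω,
          mul_nonsing_inv_cancel_right _ _ (isUnit_det_conjMatrix hp (hω.1 _).1 hk)]
    _ ≤ K * (4 * ‖AIter k ω n‖) * D := by
        refine (entrySum_mul_le _ _).trans (mul_le_mul ((entrySum_mul_le _ _).trans ?_)
          (hD (mem_image_of_mem _ (hω.1 _).2)) (entrySum_nonneg _) (by positivity))
        exact mul_le_mul (hK (mem_image_of_mem _ (hω.1 _).2)) (entrySum_le_norm _)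
          (entrySum_nonneg _) K_nonneg
    _ ≤ (K * 4 * D + 1) * ‖AIter k ω n‖ := by linarith [norm_nonneg (AIter k ω n)]

lemma continuous_Acoc (k : ℝ) : Continuous (Acoc k) := by
  have factor : Acoc k = (fun x : ℕ × ℕ => Acoc k fun i => if i = 0 then x.1 else x.2) ∘
      fun ω => (ω 0, ω (-1)) := by
    funext ω
    simp [Acoc]
  rw [factor]
  exact continuous_of_discreteTopology.comp ((continuous_apply _).prodMk (continuous_apply _))

lemma continuous_AIter (k : ℝ) (n : ℕ) : Continuous fun ω => AIter k ω n := by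
  have continuous_shift : Continuous shift := continuous_pi fun i => continuous_apply _
  induction n with
  | zero => exact continuous_const
  | succ n ih => exact ((continuous_Acoc k).comp (continuous_shift.iterate n)).matrix_mul ih

lemma exists_norm_AIter_le (ℓ : ℕ) (W : Set (ℕ × ℕ)) (k : ℝ) (n : ℕ) :
    ∃ K, ∀ ω ∈ SFT ℓ W, ‖AIter k ω n‖ ≤ K := by
  have compact : IsCompact (univ.pi fun _ : ℤ => Iic ℓ) :=
    isCompact_univ_pi fun _ => (finite_Iic ℓ).isCompact
  obtain ⟨K, hK⟩ := compact.exists_bound_of_continuousOn (continuous_AIter k n).continuousOn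
  exact ⟨K, fun ω hω => hK ω fun i _ => (hω.1 i).2⟩

variable {μ : Measure (ℤ → ℕ)} [IsProbabilityMeasure μ]

lemma exists_log_entrySum_wordProd_le (W : Set (ℕ × ℕ)) (hp : 1 ≤ p) (hk : sin k ≠ 0) :
    ∃ C, ∀ ω ∈ SFT ℓ W, ∀ n,
      log (entrySum ↑(wordProd (letterMatrix ℓ p k) ω n)) ≤ C + log ‖AIter k ω n‖ := by
  obtain ⟨K, K_pos, hK⟩ := exists_entrySum_wordProd_le_norm W hp hk (ℓ := ℓ)
  refine ⟨log K, fun ω hω n => ?_⟩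
  have one_le := one_le_entrySum_SL (wordProd (letterMatrix ℓ p k) ω n)
  have norm_pos : 0 < ‖AIter k ω n‖ :=
    pos_of_mul_pos_right (one_pos.trans_le (one_le.trans (hK ω hω n))) K_pos.le
  rw [← log_mul K_pos.ne' norm_pos.ne']
  exact log_le_log (one_pos.trans_le one_le) (hK ω hω n)

lemma integrable_log_norm_AIter (hSFT : ∀ᵐ ω ∂μ, ω ∈ SFT ℓ W) (hp : 1 ≤ p) (hk : sin k ≠ 0)
    (n : ℕ) : Integrable (fun ω => log ‖AIter k ω n‖) μ := by
  obtain ⟨B, hB⟩ := exists_norm_AIter_le ℓ W k n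
  obtain ⟨C, hC⟩ := exists_log_entrySum_wordProd_le W hp hk (ℓ := ℓ)
  have measurable : Measurable fun ω => log ‖AIter k ω n‖ :=
    measurable_log.comp (continuous_norm.comp (continuous_AIter k n)).measurable
  refine Integrable.of_bound measurable.aestronglyMeasurable (max B C) ?_
  filter_upwards [hSFT] with ω hω
  have lower := log_nonneg (one_le_entrySum_SL (wordProd (letterMatrix ℓ p k) ω n))
  rw [norm_eq_abs, abs_le']
  exact ⟨((log_le_self (norm_nonneg _)).trans (hB ω hω)).trans (le_max_left _ _),
    (by linarith [hC ω hω n] : _ ≤ C).trans (le_max_right _ _)⟩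

lemma tendsto_log_entrySum_wordProd (hSFT : ∀ᵐ ω ∂μ, ω ∈ SFT ℓ W) (hp : 1 ≤ p) (hk : sin k ≠ 0)
    (hL : Tendsto (fun n : ℕ => (1 / (n : ℝ)) * ∫ ω, log ‖AIter k ω n‖ ∂μ) atTop (𝓝 0)) :
    Tendsto (fun n : ℕ => (∫ ω, log (entrySum ↑(wordProd (letterMatrix ℓ p k) ω n)) ∂μ) / n)
      atTop (𝓝 0) := by
  obtain ⟨C, hC⟩ := exists_log_entrySum_wordProd_le W hp hk (ℓ := ℓ)
  have nonneg (n : ℕ) : 0 ≤ ∫ ω, log (entrySum ↑(wordProd (letterMatrix ℓ p k) ω n)) ∂μ :=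
    integral_nonneg fun ω => log_nonneg (one_le_entrySum_SL _)
  have upper : Tendsto (fun n : ℕ => C / n + (1 / (n : ℝ)) * ∫ ω, log ‖AIter k ω n‖ ∂μ) atTop
      (𝓝 0) := by
    simpa only [add_zero] using (tendsto_const_div_atTop_nhds_zero_nat C).add hL
  refine squeeze_zero (fun n => div_nonneg (nonneg n) n.cast_nonneg) (fun n => ?_) upper
  rw [one_div_mul_eq_div, ← add_div]
  gcongr
  have integrable := integrable_log_norm_AIter hSFT hp hk n
  calc ∫ ω, log (entrySum ↑(wordProd (letterMatrix ℓ p k) ω n)) ∂μ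
      ≤ ∫ ω, C + log ‖AIter k ω n‖ ∂μ := by
        refine integral_mono_ae (integrable_log_entrySum_wordProd
          (exists_entrySum_letterMatrix_le ℓ p k) n) ((integrable_const _).add integrable) ?_
        filter_upwards [hSFT] with ω hω using hC ω hω n
    _ = C + ∫ ω, log ‖AIter k ω n‖ ∂μ := by
        rw [integral_add (integrable_const _) integrable, integral_const, probReal_univ, one_smul]

end Conjugation

section Loop

open scoped MatrixGroups

variable {ℓ p : ℕ} {W : Set (ℕ × ℕ)} {ω : ℤ → ℕ} {μ : Measure (ℤ → ℕ)}

lemma isOpen_letter (n : ℤ) (s : Set ℕ) : IsOpen {ω : ℤ → ℕ | ω n ∈ s} :=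
  (isOpen_discrete s).preimage (continuous_apply n : Continuous fun ω : ℤ → ℕ => ω n)

lemma FullSupport.measure_letter_ne_zero (hsupp : FullSupport ℓ W μ) (hω : ω ∈ SFT ℓ W) (n : ℕ) :
    μ {ω' | ω' 0 = ω n} ≠ 0 :=
  (hsupp _ (isOpen_letter 0 {ω n})
    ⟨shift^[n] ω, by simp [shift_iterate_apply], shift_iterate_mem_SFT hω n⟩).ne'

lemma FullSupport.measure_transition_ne_zero (hsupp : FullSupport ℓ W μ) (hω : ω ∈ SFT ℓ W)
    (n : ℕ) : μ {ω' | ω' 0 = ω n ∧ ω' 1 = ω (n + 1 : ℕ)} ≠ 0 :=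
  (hsupp _ ((isOpen_letter 0 {ω n}).inter (isOpen_letter 1 {ω (n + 1 : ℕ)}))
    ⟨shift^[n] ω, by simp [shift_iterate_apply, add_comm], shift_iterate_mem_SFT hω n⟩).ne'

lemma exists_ne_and_succ_eq {α : Type*} {u : ℕ → α} {a : α} {n m : ℕ} (hn : u n ≠ a)
    (hm : u m = a) (hnm : n ≤ m) : ∃ s, u s ≠ a ∧ u (s + 1) = a := by
  by_contra! h
  exact Nat.le_induction (P := fun i _ => u i ≠ a) hn (fun s _ hs => h s hs) m hnm hm

lemma ae_exists_iterate_mem_of_ergodic {α : Type*} [MeasurableSpace α] {ν : Measure α}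
    [IsFiniteMeasure ν] {T : α → α} (hT : Ergodic T ν) {s : Set α} (hs : MeasurableSet s)
    (hs0 : ν s ≠ 0) : ∀ᵐ x ∂ν, ∃ n, T^[n] x ∈ s := by
  have measurable : MeasurableSet {x | ∃ n, T^[n] x ∈ s} :=
    ofPred_exists (fun n x => T^[n] x ∈ s) ▸
      MeasurableSet.iUnion fun n => hT.measurable.iterate n hs
  have preimage_subset : T ⁻¹' {x | ∃ n, T^[n] x ∈ s} ⊆ {x | ∃ n, T^[n] x ∈ s} :=
    fun _ ⟨n, hn⟩ => ⟨n + 1, hn⟩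
  rcases hT.ae_empty_or_univ_of_preimage_ae_le measurable.nullMeasurableSet
    preimage_subset.eventuallyLE with empty | full
  · have subset : s ⊆ {x | ∃ n, T^[n] x ∈ s} := fun x hx => ⟨0, hx⟩
    exact absurd (measure_mono_null subset (ae_eq_empty.1 empty)) hs0
  · exact eventuallyEq_univ.1 full

lemma exists_loop [IsFiniteMeasure μ] (hSFT : ∀ᵐ ω ∂μ, ω ∈ SFT ℓ W) (herg : Ergodic shift μ)
    (hp : μ {ω | ω 0 = p} ≠ 0) (hp' : μ {ω | ω 0 ≠ p} ≠ 0) :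
    ∃ ω ∈ SFT ℓ W, ω 0 = p ∧ ∃ s : ℕ, ω s ≠ p ∧ ω (s + 1 : ℕ) = p := by
  have leaves := ae_exists_iterate_mem_of_ergodic herg (isOpen_letter 0 {p}ᶜ).measurableSet hp'
  obtain ⟨ω, ⟨h0, returns⟩, hω, n, hn⟩ :=
    ((herg.toMeasurePreserving.conservative.frequently_ae_mem_and_frequently_image_mem
      (isOpen_letter 0 {p}).measurableSet.nullMeasurableSet hp).and_eventually
      (hSFT.and leaves)).exists
  obtain ⟨m, hm, hmp⟩ := frequently_atTop.1 returns n
  simp only [mem_ofPred_eq, mem_compl_iff, mem_singleton_iff, shift_iterate_apply, zero_add]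
    at hn hmp
  exact ⟨ω, hω, h0, exists_ne_and_succ_eq hn hmp hm⟩

lemma letterMean_wordProd [IsProbabilityMeasure μ] (hμ : MeasurePreserving shift μ μ)
    (hsupp : FullSupport ℓ W μ) {G : ℕ → SL(2, ℝ)} (hω : ω ∈ SFT ℓ W)
    (hind : ∀ n : ℕ, AsympIndep G μ (ω n)) (n : ℕ) {f : (Fin 2 → ℝ) → ℝ} (hf : BddMeasurable f) :
    letterMean G μ (ω n) f = letterMean G μ (ω 0) fun x => f (wordProd G ω n • x) := by
  induction n generalizing f with
  | zero => simp only [Nat.cast_zero, wordProd, one_smul]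
  | succ n ih =>
    rw [letterMean_step hμ (hind n) (hind (n + 1)) (hsupp.measure_transition_ne_zero hω n) hf,
      ih (hf.comp (measurable_const_smul _))]
    simp only [wordProd, mul_smul]

end Loop

section RotationParameters

open Polynomial
open scoped MatrixGroups

/-- The matrix `ellipticMatrix t k` divided by `sin k`, as a polynomial in `cot k`. -/
noncomputable def ellipticPencil (t : ℝˣ) : Matrix (Fin 2) (Fin 2) ℂ[X] :=
  !![X, C (t : ℂ); -C (t : ℂ)⁻¹, X]

lemma map_eval_ellipticPencil (z : ℂ) (t : ℝˣ) :
    (evalRingHom z).mapMatrix (ellipticPencil t) = !![z, (t : ℂ); -(t : ℂ)⁻¹, z] := by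
  ext i j
  fin_cases i <;> fin_cases j <;> simp [ellipticPencil]

lemma map_ofReal_ellipticMatrix {k : ℝ} (hk : sin k ≠ 0) (t : ℝˣ) :
    Complex.ofRealHom.mapMatrix (ellipticMatrix t k : Matrix (Fin 2) (Fin 2) ℝ) =
      (sin k : ℂ) • (evalRingHom (Real.cot k : ℂ)).mapMatrix (ellipticPencil t) := by
  have sin_mul_cot : (cos k : ℂ) = sin k * Real.cot k := by
    rw [Real.cot_eq_cos_div_sin, ← Complex.ofReal_mul, mul_div_cancel₀ _ hk]
  rw [coe_ellipticMatrix, map_eval_ellipticPencil]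
  ext i j
  fin_cases i <;> fin_cases j <;> simp [-Complex.ofReal_cos, -Complex.ofReal_sin,
    -Complex.ofReal_cot, sin_mul_cot, mul_comm]

lemma wordProd_smul {R A : Type*} [CommMonoid R] [Monoid A] [MulAction R A] [IsScalarTower R A A]
    [SMulCommClass R A A] (c : R) (g : ℕ → A) (ω : ℤ → ℕ) (n : ℕ) :
    wordProd (fun b => c • g b) ω n = c ^ n • wordProd g ω n := by
  induction n with
  | zero => rw [wordProd, wordProd, pow_zero, one_smul]
  | succ n ih => rw [wordProd, wordProd, ih, smul_mul_smul_comm, pow_succ']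

variable {r : ℕ → ℝˣ} {ω : ℤ → ℕ}

lemma map_ofReal_wordProd_ellipticMatrix (r : ℕ → ℝˣ) (ω : ℤ → ℕ) {k : ℝ} (hk : sin k ≠ 0)
    (n : ℕ) :
    Complex.ofRealHom.mapMatrix
        ↑(wordProd (fun b => ellipticMatrix (r b) k) ω n) =
      (sin k : ℂ) ^ n • (evalRingHom (Real.cot k : ℂ)).mapMatrix
        (wordProd (fun b => ellipticPencil (r b)) ω n) := by
  have elliptic := map_wordProd
    (Complex.ofRealHom.mapMatrix.toMonoidHom.comp Matrix.SpecialLinearGroup.coeMonoidHom)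
    (fun b => ellipticMatrix (r b) k) ω n
  have pencil := map_wordProd (evalRingHom (Real.cot k : ℂ)).mapMatrix.toMonoidHom
    (fun b => ellipticPencil (r b)) ω n
  calc Complex.ofRealHom.mapMatrix ↑(wordProd (fun b => ellipticMatrix (r b) k) ω n)
      = wordProd (fun b => (sin k : ℂ) •
          (evalRingHom (Real.cot k : ℂ)).mapMatrix (ellipticPencil (r b))) ω n := by
        simp only [← map_ofReal_ellipticMatrix hk]
        exact elliptic
    _ = _ := by
        rw [wordProd_smul]
        exact congrArg _ pencil.symm

lemma map_eval_I_ellipticPencil (t : ℝˣ) :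
    (evalRingHom Complex.I).mapMatrix (ellipticPencil t) =
      vecMulVec ![Complex.I, -(t : ℂ)⁻¹] ![1, -Complex.I * t] := by
  rw [map_eval_ellipticPencil]
  ext i j
  fin_cases i <;> fin_cases j <;> simp [vecMulVec_apply, ← mul_assoc]
  field_simp

lemma exists_map_eval_I_wordProd_ellipticPencil (hr : ∀ b, 0 < (r b : ℝ)) (ω : ℤ → ℕ) (n : ℕ) :
    ∃ κ : ℂ, κ ≠ 0 ∧
      (evalRingHom Complex.I).mapMatrix (wordProd (fun b => ellipticPencil (r b)) ω (n + 1)) =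
        κ • vecMulVec ![Complex.I, -(r (ω n) : ℂ)⁻¹] ![1, -Complex.I * r (ω 0)] := by
  induction n with
  | zero =>
    refine ⟨1, one_ne_zero, ?_⟩
    rw [wordProd, wordProd, mul_one, map_eval_I_ellipticPencil, one_smul, Nat.cast_zero]
  | succ n ih =>
    obtain ⟨κ, κ_ne_zero, hκ⟩ := ih
    have ratio_pos := div_pos (hr (ω (n + 1 : ℕ))) (hr (ω n))
    have pairing : ![1, -Complex.I * r (ω (n + 1 : ℕ))] ⬝ᵥ ![Complex.I, -(r (ω n) : ℂ)⁻¹] =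
        Complex.I * (1 + (r (ω (n + 1 : ℕ)) / r (ω n) : ℝ) : ℝ) := by
      simp only [neg_mul, dotProduct_cons, head_cons, one_mul, tail_cons, mul_neg, neg_neg,
        dotProduct_of_isEmpty, add_zero, Complex.ofReal_add, Complex.ofReal_one,
        Complex.ofReal_div]
      ring
    refine ⟨κ * (Complex.I * (1 + (r (ω (n + 1 : ℕ)) / r (ω n) : ℝ) : ℝ)), ?_, ?_⟩
    · refine mul_ne_zero κ_ne_zero (mul_ne_zero Complex.I_ne_zero ?_)
      exact Complex.ofReal_ne_zero.2 (by positivity)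
    · rw [wordProd, map_mul, hκ, map_eval_I_ellipticPencil, Matrix.mul_smul,
        vecMulVec_mul_vecMulVec, pairing, vecMulVec_smul, smul_smul]

/-- A polynomial in `cot k` which vanishes when the word in `ellipticMatrix (r b) k` of the given
length is a rotation. -/
noncomputable def rotationDefect (r : ℕ → ℝˣ) (ω : ℤ → ℕ) (n : ℕ) : ℂ[X] :=
  let M := wordProd (fun b => ellipticPencil (r b)) ω n
  M 0 0 - M 1 1 + C Complex.I * (M 0 1 + M 1 0)

lemma rotationDefect_ne_zero (hr : ∀ b, 0 < (r b : ℝ)) (h0 : r (ω 0) = 1) {s : ℕ}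
    (hs : r (ω s) ≠ 1) : rotationDefect r ω (s + 1) ≠ 0 := by
  intro defect_eq_zero
  obtain ⟨κ, κ_ne_zero, hκ⟩ := exists_map_eval_I_wordProd_ellipticPencil hr ω s
  have entry (i j : Fin 2) := congrFun (congrFun hκ i) j
  simp only [RingHom.mapMatrix_apply, Matrix.map_apply, coe_evalRingHom] at entry
  have eval_I : (rotationDefect r ω (s + 1)).eval Complex.I =
      κ * (2 * Complex.I * (1 - (r (ω s) : ℂ)⁻¹)) := by
    simp only [rotationDefect, eval_add, eval_sub, eval_mul, eval_C, entry, h0, Matrix.smul_apply,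
      smul_eq_mul, vecMulVec_apply, cons_val_zero, cons_val_one, cons_val_fin_one, Units.val_one,
      Complex.ofReal_one]
    linear_combination -κ * Complex.I * Complex.I_sq
  rw [defect_eq_zero, eval_zero] at eval_I
  have inv_ne_one : (r (ω s) : ℂ)⁻¹ ≠ 1 := by
    rw [Ne, inv_eq_one, Complex.ofReal_eq_one, Units.val_eq_one]
    exact hs
  exact mul_ne_zero κ_ne_zero (mul_ne_zero (mul_ne_zero two_ne_zero Complex.I_ne_zero)
    (sub_ne_zero.2 inv_ne_one.symm)) eval_I.symm

lemma isRoot_rotationDefect {k : ℝ} (hk : sin k ≠ 0) {n : ℕ}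
    (hrot : IsRotation ↑(wordProd (fun b => ellipticMatrix (r b) k) ω n)) :
    (rotationDefect r ω n).IsRoot (Real.cot k : ℂ) := by
  have word := map_ofReal_wordProd_ellipticMatrix r ω hk n
  have entry (i j : Fin 2) := congrFun (congrFun word i) j
  simp only [RingHom.mapMatrix_apply, Matrix.map_apply, Matrix.smul_apply, smul_eq_mul,
    coe_evalRingHom, Complex.ofRealHom_eq_coe] at entry
  have defect : (sin k : ℂ) ^ n * (rotationDefect r ω n).eval (Real.cot k : ℂ) = 0 := by
    simp only [rotationDefect, eval_add, eval_sub, eval_mul, eval_C]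
    have diagonal := congrArg (fun x : ℝ => (x : ℂ)) hrot.1
    have antidiagonal := congrArg (fun x : ℝ => (x : ℂ)) hrot.2
    simp only [Complex.ofReal_neg, entry] at diagonal antidiagonal
    linear_combination Complex.I * antidiagonal - diagonal
  exact (mul_eq_zero.1 defect).resolve_left (pow_ne_zero _ (Complex.ofReal_ne_zero.2 hk))

lemma injOn_cot : InjOn Real.cot (Ioo 0 π) := by
  have cot_eq_tan (k : ℝ) : Real.cot k = tan (π / 2 - k) := by
    rw [tan_pi_div_two_sub, Real.cot_eq_cos_div_sin, tan_eq_sin_div_cos, inv_div]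
  have mem {k : ℝ} (hk : k ∈ Ioo 0 π) : π / 2 - k ∈ Ioo (-(π / 2)) (π / 2) :=
    ⟨by linarith [hk.2], by linarith [hk.1]⟩
  intro k hk k' hk' h
  rw [cot_eq_tan, cot_eq_tan] at h
  exact sub_right_injective (injOn_tan (mem hk) (mem hk') h)

lemma finite_rotation_parameters (hr : ∀ b, 0 < (r b : ℝ)) (h0 : r (ω 0) = 1) {s : ℕ}
    (hs : r (ω s) ≠ 1) :
    {k ∈ Ioo 0 π | IsRotation ↑(wordProd (fun b => ellipticMatrix (r b) k) ω (s + 1))}.Finite := by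
  refine .of_finite_image ((finite_setOfPred_isRoot (rotationDefect_ne_zero hr h0 hs)).subset ?_)
    (f := fun k => (Real.cot k : ℂ)) ?_
  · rintro _ ⟨k, ⟨hk, hrot⟩, rfl⟩
    exact isRoot_rotationDefect (sin_pos_of_mem_Ioo hk).ne' hrot
  · exact fun k hk k' hk' h => injOn_cot hk.1 hk'.1 (Complex.ofReal_injective h)

end RotationParameters

section Conclusion

open scoped MatrixGroups

variable {ℓ p : ℕ} {W : Set (ℕ × ℕ)} {x ω : ℤ → ℕ} {μ : Measure (ℤ → ℕ)} {k : ℝ}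

lemma letterRatio_self (hp : 1 ≤ p ∧ p ≤ ℓ) : letterRatio ℓ p p = 1 := by
  rw [Units.ext_iff, coe_letterRatio hp.1 hp, Units.val_one]
  exact div_self (Nat.cast_ne_zero.2 (Nat.one_le_iff_ne_zero.1 hp.1))

lemma letterRatio_ne_one {b : ℕ} (hp : 1 ≤ p) (hb : 1 ≤ b ∧ b ≤ ℓ) (h : b ≠ p) :
    letterRatio ℓ p b ≠ 1 := by
  rw [Ne, Units.ext_iff, coe_letterRatio hp hb, Units.val_one, div_eq_one_iff_eq
    (Nat.cast_ne_zero.2 (Nat.one_le_iff_ne_zero.1 hb.1)), Nat.cast_inj]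
  exact h.symm

lemma coe_letterMatrix_self (hp : 1 ≤ p ∧ p ≤ ℓ) (k : ℝ) :
    (letterMatrix ℓ p k p : Matrix (Fin 2) (Fin 2) ℝ) = !![cos k, sin k; -sin k, cos k] := by
  simp only [letterMatrix, letterRatio_self hp, coe_ellipticMatrix, Units.val_one, inv_one, one_mul]

lemma isRotation_wordProd [IsProbabilityMeasure μ] (hSFT : ∀ᵐ ω ∂μ, ω ∈ SFT ℓ W)
    (hμ : MeasurePreserving shift μ μ) (hlps : LocalProductStructure ℓ W μ)
    (hsupp : FullSupport ℓ W μ) (hx : x ∈ SFT ℓ W) (hxp : ∀ n, x n = p) (hcos : cos k ≠ 0)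
    (hsin : sin k ≠ 0)
    (hL : Tendsto (fun n : ℕ => (1 / (n : ℝ)) * ∫ ω, log ‖AIter k ω n‖ ∂μ) atTop (𝓝 0))
    (hω : ω ∈ SFT ℓ W) (h0 : ω 0 = p) {n : ℕ} (hn : ω n = p) :
    IsRotation ↑(wordProd (letterMatrix ℓ p k) ω n) := by
  have hp : 1 ≤ p ∧ p ≤ ℓ := hxp 0 ▸ hx.1 0
  have hind {y : ℤ → ℕ} (hy : y ∈ SFT ℓ W) (m : ℕ) : AsympIndep (letterMatrix ℓ p k) μ (y m) :=
    asympIndep_of_tendsto hSFT hlps hμ (exists_entrySum_letterMatrix_le ℓ p k)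
      (tendsto_log_entrySum_wordProd hSFT hp.1 hsin hL) (hy.1 m).1 (hy.1 m).2
      (hsupp.measure_letter_ne_zero hy m)
  have mean : IsMean (letterMean (letterMatrix ℓ p k) μ p) := by
    simpa only [hxp] using isMean_letterMean hμ (hsupp.measure_letter_ne_zero hx 0) (hind hx 0)
  have fixed_invariant (f) (hf : BddMeasurable f) :
      letterMean (letterMatrix ℓ p k) μ p (fun v => f (letterMatrix ℓ p k p • v)) =
        letterMean (letterMatrix ℓ p k) μ p f := by
    have word := letterMean_wordProd hμ hsupp hx (hind hx) 1 hf
    simpa only [wordProd, mul_one, hxp] using word.symm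
  have loop_invariant (f) (hf : BddMeasurable f) :
      letterMean (letterMatrix ℓ p k) μ p (fun v => f (wordProd (letterMatrix ℓ p k) ω n • v)) =
        letterMean (letterMatrix ℓ p k) μ p f := by
    have word := letterMean_wordProd hμ hsupp hω (hind hω) n hf
    rw [hn, h0] at word
    exact word.symm
  have low : LowFrequencyFree (letterMean (letterMatrix ℓ p k) μ p) := by
    refine mean.lowFrequencyFree (R := letterMatrix ℓ p k p) ?_ ?_ ?_ fixed_invariant <;>
      rw [coe_letterMatrix_self hp]
    exacts [⟨rfl, rfl⟩, hcos, hsin]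
  exact mean.isRotation_of_invariant low _ loop_invariant

lemma apply_eq_apply_zero_of_shift_eq (hx : shift x = x) (n : ℤ) : x n = x 0 := by
  have step (n : ℤ) : x (n + 1) = x n := congrFun hx n
  induction n using Int.induction_on with
  | zero => rfl
  | succ n ih => rw [step, ih]
  | pred n ih => rw [← step, sub_add_cancel, ih]

lemma FullSupport.measure_ne_letter_ne_zero (hsupp : FullSupport ℓ W μ)
    (hω : ω ∈ SFT ℓ W) (hfix : shift ω ≠ ω) (p : ℕ) : μ {ω' | ω' 0 ≠ p} ≠ 0 := by
  obtain ⟨n, hn⟩ : ∃ n, ω n ≠ p := by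
    by_contra! h
    exact hfix (funext fun n => (h (n + 1)).trans (h n).symm)
  refine (hsupp _ (isOpen_letter 0 {p}ᶜ) ⟨fun i => ω (i + n), ?_, fun i => hω.1 _, fun i => ?_⟩).ne'
  · simpa only [mem_compl_iff, mem_singleton_iff, mem_ofPred_eq, zero_add] using hn
  · simpa only [add_right_comm] using hω.2 (i + n)

lemma cos_ne_zero_of_mem_Icc (hk : k ∈ Icc 0 π) (hne : k ≠ π / 2) : cos k ≠ 0 := fun h =>
  hne (injOn_cos hk ⟨by positivity, half_le_self pi_pos.le⟩ (h.trans cos_pi_div_two.symm))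

end Conclusion

/-- Suppose `μ` is a shift-ergodic Borel probability measure on `Ω` that has a
local product structure and full support, `T` has a fixed point in `Ω`, and `Ω`
contains a point that is not a fixed point.  Then the set
`𝔏(A,μ) = {k ∈ [0,π] : L(A^{(k)}, μ) = 0}` is finite. -/
theorem statement4 (ℓ : ℕ) (hℓ : 1 < ℓ) (W : Set (ℕ × ℕ))
    (μ : Measure (ℤ → ℕ)) [IsProbabilityMeasure μ]
    (hconc : μ (SFT ℓ W)ᶜ = 0)
    (herg : Ergodic shift μ)
    (hlps : LocalProductStructure ℓ W μ)
    (hsupp : FullSupport ℓ W μ)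
    (hfix : ∃ p ∈ SFT ℓ W, shift p = p)
    (hnonfix : ∃ q ∈ SFT ℓ W, shift q ≠ q)
    (L : ℝ → ℝ)
    (hL : ∀ k : ℝ,
      Tendsto (fun n : ℕ => (1 / (n : ℝ)) * ∫ ω, Real.log ‖AIter k ω n‖ ∂μ)
        atTop (𝓝 (L k))) :
    {k ∈ Icc (0 : ℝ) π | L k = 0}.Finite := by
  obtain ⟨x, hx, hx_fix⟩ := hfix
  obtain ⟨q, hq, hq_nonfix⟩ := hnonfix
  obtain ⟨ω, hω, h0, s, hs, hs1⟩ := exists_loop (p := x 0) hconc herg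
    (hsupp.measure_letter_ne_zero hx 0) (hsupp.measure_ne_letter_ne_zero hq hq_nonfix (x 0))
  have ratio_zero : letterRatio ℓ (x 0) (ω 0) = 1 := by rw [h0, letterRatio_self (hx.1 0)]
  have ratio_s := letterRatio_ne_one (hx.1 0).1 (hω.1 s) hs
  have finite_rotations := finite_rotation_parameters (letterRatio_pos ℓ (x 0)) ratio_zero ratio_s
  refine (finite_rotations.union (toFinite {0, π / 2, π})).subset fun k ⟨hk, hLk⟩ => ?_
  rw [mem_union, or_iff_not_imp_right]
  intro not_special
  simp only [mem_insert_iff, mem_singleton_iff, not_or] at not_special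
  have hkI : k ∈ Ioo 0 π :=
    ⟨hk.1.lt_of_ne' not_special.1, hk.2.lt_of_ne not_special.2.2⟩
  exact ⟨hkI, isRotation_wordProd hconc herg.toMeasurePreserving hlps hsupp hx
    (apply_eq_apply_zero_of_shift_eq hx_fix) (cos_ne_zero_of_mem_Icc hk not_special.2.1)
    (sin_pos_of_mem_Ioo hkI).ne' (hLk ▸ hL k) hω h0 hs1⟩
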